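/- Let ℓ be an odd prime and n ≥ 2 an integer. Let X be the (finite) set of finitely supported functions w assigning to each quadruple (a, x, 𝔠, j) — where a ∈ ℕ, x ∈ {0,1}, 𝔠 ∈ 𝒞 and 1 ≤ j ≤ (ℓ−1)^{t(𝔠)} — an ℓ-core partition, subject to Σ_{(a,x,𝔠,j)} ℓ^{a+|𝔠|} · |w(a,x,𝔠,j)| = n. Let σ: X → X be the involution defined by (σw)(a,x,𝔠,j) = w(a,1−x,𝔠,j), and let F be the number of fixed points of σ on X. Then 2F + (|X| − F)/2 equals the number of conjugacy classes of the group of n×n signed permutation matrices having an even number of entries equal to −1 (the Weyl group of type D_n). (This is the combinatorial content of the weight count for the fusion system of the compact Lie group SO(2n) at an odd prime ℓ.) -/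

import Mathlib

open Matrix

/-- The sum `|𝔠| = c₁ + ⋯ + c_t` of a finite sequence `𝔠` of strictly positive integers. -/
def csum (c : List ℕ+) : ℕ := (c.map fun x => (x : ℕ)).sum

/-- The beta-set (set of first-column hook lengths) of a partition `p`, computed with `N`
beads: if the parts of `p` in decreasing order (padded with zeros to length `N`) are
`λ₁ ≥ λ₂ ≥ … ≥ λ_N`, then `betaSet p N = {λ₁ + N - 1, λ₂ + N - 2, …, λ_N}`. -/
def betaSet {n : ℕ} (p : Nat.Partition n) (N : ℕ) : Finset ℕ :=
  (Finset.range N).image fun i => ((p.parts.sort (· ≥ ·)).getD i 0) + (N - 1 - i)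

/-- A partition is an `ℓ`-core if (for every `N` at least the number of parts) its beta-set
`B` on `N` beads satisfies: every `b ∈ B` with `b ≥ ℓ` has `b - ℓ ∈ B`.  This is equivalent
to the Young diagram having no hook of length `ℓ`. -/
def IsCore (ℓ : ℕ) {n : ℕ} (p : Nat.Partition n) : Prop :=
  ∀ N : ℕ, Multiset.card p.parts ≤ N →
    ∀ b ∈ betaSet p N, ℓ ≤ b → b - ℓ ∈ betaSet p N

/-- A signed permutation matrix: exactly one nonzero entry in each row and each column,
each nonzero entry being `1` or `-1`. -/
def IsSignedPerm {n : ℕ} (M : Matrix (Fin n) (Fin n) ℤ) : Prop :=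
  (∀ i j, M i j = 0 ∨ M i j = 1 ∨ M i j = -1) ∧
  (∀ i, ∃! j, M i j ≠ 0) ∧ (∀ j, ∃! i, M i j ≠ 0)

/-- A signed permutation matrix with an even number of entries equal to `-1`
(an element of the Weyl group of type `D_n`). -/
def IsWeylD {n : ℕ} (M : Matrix (Fin n) (Fin n) ℤ) : Prop :=
  IsSignedPerm M ∧
    Even (Finset.univ.filter fun p : Fin n × Fin n => M p.1 p.2 = -1).card

/-- The index-flipping involution `(a, x, 𝔠, j) ↦ (a, 1 - x, 𝔠, j)`. -/
def flipIdx (ℓ : ℕ) :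
    (ℕ × Fin 2 × Σ c : List ℕ+, Fin ((ℓ - 1) ^ c.length)) →
      ℕ × Fin 2 × Σ c : List ℕ+, Fin ((ℓ - 1) ^ c.length) :=
  fun i => (i.1, 1 - i.2.1, i.2.2)

/-
For a fixed `x`, the index `(0, x, (), 1)` has weight `1`, and the remaining ones form `ℓ` copies of
the set of all indices with weights multiplied by `ℓ`: if `a > 0`, lower `a`; if `a = 0`, remove the
first part `b` of `𝔠` and take `b - 1` as the new `a`, which loses a factor `ℓ - 1` in the range of
`j`. Hence such a family of `ℓ`-cores is an `ℓ`-core together with `ℓ` families, just as a partition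
is given by its `ℓ`-core and its `ℓ`-quotient. The two recursions agree, so `X` is in bijection with
the pairs of partitions of total size `n`, where `σ` swaps the two partitions and `F` counts the
partitions `λ` with `2 * |λ| = n`.

Pairs of partitions are also the signed cycle types of signed permutations, that is, the conjugacy
classes of the Weyl group of type `B`. Those of total sign `1` lie in the subgroup of type `D`, and
such a class splits into two exactly when everything centralizing it has total sign `1`. The
rotation of a cycle has the sign of that cycle as its total sign and the negation of a cycle of
length `m` has `(-1) ^ m`, so the split types are those with only positive cycles of even length;
there are `F` of them. Finally, a sign-reversing involution shows that the types of total sign `1`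
outnumber those of total sign `-1` by `F`. So there are `(|X| + F) / 2` types in the subgroup, and
`(|X| + F) / 2 + F = 2 * F + (|X| - F) / 2`.
-/

/-- `SizeEquiv sA sB` says that the combinatorial classes `(A, sA)` and `(B, sB)` are isomorphic:
there is a bijection `A ≃ B` carrying the size `sA` to the size `sB`. -/
def SizeEquiv {A B : Type*} (sA : A → ℕ) (sB : B → ℕ) : Prop :=
  ∃ e : A ≃ B, ∀ a, sB (e a) = sA a

namespace SizeEquiv

variable {A B C : Type*} {sA : A → ℕ} {sB : B → ℕ} {sC : C → ℕ}

theorem trans : SizeEquiv sA sB → SizeEquiv sB sC → SizeEquiv sA sC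
  | ⟨e, he⟩, ⟨f, hf⟩ => ⟨e.trans f, fun a => by rw [Equiv.trans_apply, hf, he]⟩

theorem of_fiber (h : ∀ n, Nonempty ({a // sA a = n} ≃ {b // sB b = n})) : SizeEquiv sA sB :=
  ⟨Equiv.ofFiberEquiv fun n => (h n).some, Equiv.ofFiberEquiv_map _⟩

end SizeEquiv

section Tower

variable {A B C ι : Type*} [Fintype ι] {sA : A → ℕ} {sB : B → ℕ} (sC : C → ℕ) (k : ℕ)

/-- The sizes `(c, d)` of the pieces in a decomposition `A ≃ C × (ι → A)` that contribute to
total size `n`. -/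
abbrev TowerShape (ι : Type*) [Fintype ι] (n : ℕ) :=
  {p : C × (ι → ℕ) // sC p.1 + k * ∑ r, p.2 r = n}

/-- A pair in `C × (ι → A)` of total size `n` is given by the sizes of its pieces together with
pieces of these sizes. -/
def towerFiberEquiv (sA : A → ℕ) (n : ℕ) :
    {x : C × (ι → A) // sC x.1 + k * ∑ r, sA (x.2 r) = n} ≃
      Σ p : TowerShape sC k ι n, ∀ r, {a // sA a = p.1.2 r} where
  toFun x := ⟨⟨(x.1.1, fun r => sA (x.1.2 r)), x.2⟩, fun r => ⟨x.1.2 r, rfl⟩⟩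
  invFun y := ⟨(y.1.1.1, fun r => (y.2 r).1), by simp only [(y.2 _).2, y.1.2]⟩
  left_inv _ := rfl
  right_inv := by
    rintro ⟨⟨⟨c, d⟩, hp⟩, f⟩
    obtain ⟨g, hg, rfl⟩ : ∃ g : ι → A, ∃ hg : ∀ r, sA (g r) = d r, f = fun r => ⟨g r, hg r⟩ :=
      ⟨_, fun r => (f r).2, rfl⟩
    obtain rfl : (fun r => sA (g r)) = d := funext hg
    rfl

variable {sC k} in
theorem SizeEquiv.of_tower (hk : 2 ≤ k) (eA : A ≃ C × (ι → A))
    (hA : ∀ a, sA a = sC (eA a).1 + k * ∑ r, sA ((eA a).2 r))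
    (eB : B ≃ C × (ι → B)) (hB : ∀ b, sB b = sC (eB b).1 + k * ∑ r, sB ((eB b).2 r))
    (hA₀ : ∃! a, sA a = 0) (hB₀ : ∃! b, sB b = 0) : SizeEquiv sA sB := by
  refine .of_fiber fun n => ?_
  induction n using Nat.strong_induction_on with
  | _ n ih =>
    obtain rfl | hn := n.eq_zero_or_pos
    · obtain ⟨_⟩ := (unique_subtype_iff_existsUnique _).2 hA₀
      obtain ⟨_⟩ := (unique_subtype_iff_existsUnique _).2 hB₀
      exact ⟨Equiv.ofUnique _ _⟩
    · have piece_lt (p : TowerShape sC k ι n) (r : ι) : p.1.2 r < n := by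
        have hr := Finset.single_le_sum (f := p.1.2) (fun _ _ => Nat.zero_le _) (Finset.mem_univ r)
        have hp := p.2
        nlinarith
      exact ⟨calc
        {a // sA a = n} ≃ {x : C × (ι → A) // sC x.1 + k * ∑ r, sA (x.2 r) = n} :=
          eA.subtypeEquiv fun a => by rw [hA]
        _ ≃ Σ p : TowerShape sC k ι n, ∀ r, {a // sA a = p.1.2 r} := towerFiberEquiv sC k sA n
        _ ≃ Σ p : TowerShape sC k ι n, ∀ r, {b // sB b = p.1.2 r} :=
          .sigmaCongrRight fun p => .piCongrRight fun r => (ih _ (piece_lt p r)).some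
        _ ≃ {x : C × (ι → B) // sC x.1 + k * ∑ r, sB (x.2 r) = n} :=
          (towerFiberEquiv sC k sB n).symm
        _ ≃ {b // sB b = n} := (eB.subtypeEquiv fun b => by rw [hB]).symm⟩

end Tower

section BetaSet

/-- Partitions of arbitrary size; the size of `p` is `p.1`. -/
abbrev AnyPartition := Σ m : ℕ, Nat.Partition m

/-- The `i`-th largest part of a partition (counting from `0`), and `0` beyond the last part. -/
def nthPart {n : ℕ} (p : Nat.Partition n) (i : ℕ) : ℕ := (p.parts.sort (· ≥ ·)).getD i 0

variable {n : ℕ} (p : Nat.Partition n)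

theorem nthPart_antitone : Antitone (nthPart p) := by
  refine antitone_nat_of_succ_le fun i => ?_
  rw [nthPart, nthPart]
  rcases lt_or_ge (i + 1) (p.parts.sort (· ≥ ·)).length with hi | hi
  · rw [List.getD_eq_getElem _ _ hi, List.getD_eq_getElem _ _ (by lia)]
    exact List.pairwise_iff_getElem.1 (Multiset.pairwise_sort p.parts (· ≥ ·)) _ _ _ _
      i.lt_succ_self
  · rw [List.getD_eq_default _ _ hi]
    exact Nat.zero_le _

variable {p} in
theorem nthPart_eq_zero {i : ℕ} (hi : p.parts.card ≤ i) : nthPart p i = 0 :=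
  List.getD_eq_default _ _ (by rwa [Multiset.length_sort])

variable {p} in
theorem nthPart_pos {i : ℕ} (hi : i < p.parts.card) : 0 < nthPart p i := by
  rw [nthPart, List.getD_eq_getElem _ _ (by rwa [Multiset.length_sort])]
  exact p.parts_pos ((Multiset.mem_sort (r := (· ≥ ·))).1 (List.getElem_mem _))

theorem parts_eq_map_nthPart : p.parts = (Multiset.range p.parts.card).map (nthPart p) := by
  conv_lhs => rw [← Multiset.sort_eq p.parts (· ≥ ·)]
  refine congrArg _ (List.ext_getElem (by simp) fun i hi _ => ?_)
  rw [List.getElem_map, List.getElem_range, nthPart, List.getD_eq_getElem _ _ hi]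

variable {p} in
theorem sum_nthPart {N : ℕ} (hN : p.parts.card ≤ N) : ∑ i ∈ Finset.range N, nthPart p i = n := by
  calc ∑ i ∈ Finset.range N, nthPart p i
      = ∑ i ∈ Finset.range p.parts.card, nthPart p i :=
        (Finset.sum_subset (Finset.range_mono hN) fun i _ hi =>
          nthPart_eq_zero (by simpa using hi)).symm
    _ = p.parts.sum := congrArg Multiset.sum (parts_eq_map_nthPart p).symm
    _ = n := p.parts_sum

theorem card_parts_le_size : p.parts.card ≤ n := by
  simpa [p.parts_sum] using
    Multiset.card_nsmul_le_sum (s := p.parts) (a := 1) fun _ h => p.parts_pos h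

theorem anyPartition_ext_parts {p q : AnyPartition} (h : p.2.parts = q.2.parts) : p = q := by
  obtain ⟨m, p⟩ := p
  obtain ⟨m', q⟩ := q
  obtain rfl : m = m' := by rw [← p.parts_sum, h, q.parts_sum]
  exact congrArg _ (Nat.Partition.ext h)

theorem anyPartition_ext {p q : AnyPartition} (h : ∀ i, nthPart p.2 i = nthPart q.2 i) :
    p = q := by
  have hcard : p.2.parts.card = q.2.parts.card := by
    refine le_antisymm (le_of_not_gt fun hlt => ?_) (le_of_not_gt fun hlt => ?_)
    · exact (nthPart_pos hlt).ne' ((h _).trans (nthPart_eq_zero le_rfl))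
    · exact (nthPart_pos hlt).ne' ((h _).symm.trans (nthPart_eq_zero le_rfl))
  refine anyPartition_ext_parts ?_
  rw [parts_eq_map_nthPart, hcard, funext h, ← parts_eq_map_nthPart]

theorem exists_nthPart_eq {g : ℕ → ℕ} (hg : Antitone g) {N : ℕ} (hN : g N = 0) :
    ∃ p : AnyPartition, p.2.parts.card ≤ N ∧ nthPart p.2 = g := by
  classical
  have hex : ∃ k, g k = 0 := ⟨N, hN⟩
  let L := (List.range (Nat.find hex)).map g
  have hL : (L : Multiset ℕ).sort (· ≥ ·) = L := by
    refine List.mergeSort_of_pairwise (List.pairwise_map.2 ?_)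
    exact List.pairwise_lt_range.imp fun hab => by simpa using hg hab.le
  refine ⟨⟨L.sum, L, fun {i} hi => ?_, by simp⟩, ?_, funext fun i => ?_⟩
  · obtain ⟨j, hj, rfl⟩ := List.mem_map.1 (Multiset.mem_coe.1 hi)
    exact Nat.pos_of_ne_zero (Nat.find_min hex (List.mem_range.1 hj))
  · simpa [L] using Nat.find_min' hex hN
  · rw [nthPart, hL]
    rcases lt_or_ge i (Nat.find hex) with hi | hi
    · rw [List.getD_eq_getElem _ _ (by simpa [L] using hi)]
      simp [L]
    · rw [List.getD_eq_default _ _ (by simpa [L] using hi)]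
      exact (Nat.le_zero.1 ((hg hi).trans (Nat.find_spec hex).le)).symm

variable {p} in
theorem mem_betaSet {N x : ℕ} : x ∈ betaSet p N ↔ ∃ i < N, nthPart p i + (N - 1 - i) = x := by
  simp [betaSet, nthPart]

theorem injOn_nthPart_add (N : ℕ) :
    Set.InjOn (fun i => nthPart p i + (N - 1 - i)) (Finset.range N) := by
  refine StrictAntiOn.injOn fun i hi j hj hij => ?_
  have := nthPart_antitone p hij.le
  simp only [Finset.coe_range, Set.mem_Iio] at hi hj
  lia

theorem card_betaSet (N : ℕ) : (betaSet p N).card = N :=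
  (Finset.card_image_of_injOn (injOn_nthPart_add p N)).trans (Finset.card_range N)

variable {p} in
theorem sum_betaSet {N : ℕ} (hN : p.parts.card ≤ N) :
    ∑ x ∈ betaSet p N, x = n + ∑ i ∈ Finset.range N, i := by
  refine (Finset.sum_image (injOn_nthPart_add p N)).trans ?_
  rw [Finset.sum_add_distrib, sum_nthPart hN, Finset.sum_range_reflect (fun i => i)]

theorem nthPart_add_eq_orderEmbOfFin {N : ℕ} (i : Fin N) :
    nthPart p (N - 1 - i) + i = (betaSet p N).orderEmbOfFin (card_betaSet p N) i := by
  refine congrFun (Finset.orderEmbOfFin_unique (card_betaSet p N)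
    (f := fun i : Fin N => nthPart p (N - 1 - i) + i) (fun i => mem_betaSet.2 ?_) ?_) i
  · exact ⟨N - 1 - i, by lia, by lia⟩
  · intro i j (hij : (i : ℕ) < j)
    have := nthPart_antitone p (show N - 1 - (j : ℕ) ≤ N - 1 - i by lia)
    lia

theorem eq_of_betaSet_eq {p q : AnyPartition} {N : ℕ} (hp : p.2.parts.card ≤ N)
    (hq : q.2.parts.card ≤ N) (h : betaSet p.2 N = betaSet q.2 N) : p = q := by
  refine anyPartition_ext fun i => ?_
  rcases lt_or_ge i N with hi | hi
  · have hp := nthPart_add_eq_orderEmbOfFin p.2 (⟨N - 1 - i, by lia⟩ : Fin N)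
    have hq := nthPart_add_eq_orderEmbOfFin q.2 (⟨N - 1 - i, by lia⟩ : Fin N)
    simp only [h, show N - 1 - (N - 1 - i) = i by lia] at hp hq
    lia
  · rw [nthPart_eq_zero (hp.trans hi), nthPart_eq_zero (hq.trans hi)]

theorem add_sub_le_of_strictMono {N : ℕ} {f : Fin N → ℕ} (hf : StrictMono f) {i j : ℕ}
    (hj : j < N) (hij : i ≤ j) : f ⟨i, hij.trans_lt hj⟩ + (j - i) ≤ f ⟨j, hj⟩ := by
  induction j, hij using Nat.le_induction with
  | base => simp
  | succ j hij ih =>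
    have hlt : f ⟨j, by lia⟩ < f ⟨j + 1, hj⟩ := hf (Fin.mk_lt_mk.2 j.lt_succ_self)
    have := ih (by lia)
    lia

theorem exists_betaSet_eq (B : Finset ℕ) :
    ∃ p : AnyPartition, p.2.parts.card ≤ B.card ∧ betaSet p.2 B.card = B := by
  let b := B.orderEmbOfFin rfl
  let g : ℕ → ℕ := fun i =>
    if hi : i < B.card then b ⟨B.card - 1 - i, by lia⟩ - (B.card - 1 - i) else 0
  have hg : Antitone g := fun i j hij => by
    by_cases hj : j < B.card
    · have := add_sub_le_of_strictMono b.strictMono (i := B.card - 1 - j) (j := B.card - 1 - i)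
        (by lia) (by lia)
      simp only [g, dif_pos hj, dif_pos (hij.trans_lt hj)]
      lia
    · simp only [g, dif_neg hj, Nat.zero_le]
  obtain ⟨p, hp, hpg⟩ := exists_nthPart_eq hg (N := B.card) (dif_neg (lt_irrefl _))
  refine ⟨p, hp, Finset.eq_of_subset_of_card_le (fun x hx => ?_) (card_betaSet _ _).ge⟩
  obtain ⟨i, hi, rfl⟩ := mem_betaSet.1 hx
  have := add_sub_le_of_strictMono b.strictMono (i := 0) (j := B.card - 1 - i) (by lia) (by lia)
  rw [hpg, show g i = _ from dif_pos hi, Nat.sub_add_cancel (by lia)]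
  exact Finset.orderEmbOfFin_mem _ _ _

/-- The partition whose beta-set on `B.card` beads is `B`. -/
noncomputable def ofBeads (B : Finset ℕ) : AnyPartition := (exists_betaSet_eq B).choose

theorem card_parts_ofBeads_le (B : Finset ℕ) : (ofBeads B).2.parts.card ≤ B.card :=
  (exists_betaSet_eq B).choose_spec.1

theorem betaSet_ofBeads {B : Finset ℕ} {N : ℕ} (hB : B.card = N) : betaSet (ofBeads B).2 N = B := by
  subst hB
  exact (exists_betaSet_eq B).choose_spec.2

theorem ofBeads_betaSet {p : AnyPartition} {N : ℕ} (hp : p.2.parts.card ≤ N) :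
    ofBeads (betaSet p.2 N) = p := by
  have hcard := card_parts_ofBeads_le (betaSet p.2 N)
  rw [card_betaSet] at hcard
  exact eq_of_betaSet_eq hcard hp (betaSet_ofBeads (card_betaSet p.2 N))

theorem sum_eq_size_ofBeads_add (B : Finset ℕ) :
    ∑ x ∈ B, x = (ofBeads B).1 + ∑ i ∈ Finset.range B.card, i := by
  rw [← sum_betaSet (card_parts_ofBeads_le B), betaSet_ofBeads rfl]

end BetaSet

section CoreBeads

/-- No bead of `B` can be slid down by `ℓ` to a vacant position; this is the condition on the
beta-set in `IsCore`. -/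
def IsCoreBeads (ℓ : ℕ) (B : Finset ℕ) : Prop := ∀ b ∈ B, ℓ ≤ b → b - ℓ ∈ B

variable {n N : ℕ} {p : Nat.Partition n}

theorem zero_mem_betaSet_succ (hN : p.parts.card ≤ N) : 0 ∈ betaSet p (N + 1) :=
  mem_betaSet.2 ⟨N, by lia, by rw [nthPart_eq_zero hN]; lia⟩

theorem succ_mem_betaSet_succ (hN : p.parts.card ≤ N) (x : ℕ) :
    x + 1 ∈ betaSet p (N + 1) ↔ x ∈ betaSet p N := by
  have := nthPart_eq_zero hN
  simp only [mem_betaSet]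
  refine ⟨fun ⟨i, hi, h⟩ => ?_, fun ⟨i, hi, h⟩ => ⟨i, by lia, by lia⟩⟩
  have hne : i ≠ N := by
    rintro rfl
    lia
  exact ⟨i, by lia, by lia⟩

variable {ℓ : ℕ} [NeZero ℓ]

theorem isCoreBeads_betaSet_succ (hN : p.parts.card ≤ N) :
    IsCoreBeads ℓ (betaSet p (N + 1)) ↔ IsCoreBeads ℓ (betaSet p N) := by
  have hsucc := succ_mem_betaSet_succ hN
  refine ⟨fun h b hb hle => ?_, fun h b hb hle => ?_⟩
  · rw [← hsucc, ← Nat.sub_add_comm hle]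
    exact h (b + 1) ((hsucc b).2 hb) (by lia)
  · obtain ⟨b, rfl⟩ := Nat.exists_eq_add_one_of_ne_zero ((NeZero.pos ℓ).trans_le hle).ne'
    obtain hle | rfl := Nat.le_succ_iff.1 hle
    · rw [Nat.sub_add_comm hle, hsucc]
      exact h b ((hsucc b).1 hb) hle
    · rw [Nat.sub_self]
      exact zero_mem_betaSet_succ hN

theorem isCore_iff_isCoreBeads (hN : p.parts.card ≤ N) :
    IsCore ℓ p ↔ IsCoreBeads ℓ (betaSet p N) := by
  have hiff (M : ℕ) (hM : p.parts.card ≤ M) :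
      IsCoreBeads ℓ (betaSet p M) ↔ IsCoreBeads ℓ (betaSet p p.parts.card) := by
    induction M, hM using Nat.le_induction with
    | base => rfl
    | succ M hM ih => rw [isCoreBeads_betaSet_succ hM, ih]
  exact ⟨fun h => h N hN, fun h M hM => (hiff M hM).2 ((hiff N hN).1 h)⟩

theorem isCore_ofBeads {B : Finset ℕ} (hB : IsCoreBeads ℓ B) :
    IsCore ℓ (ofBeads B).2 := by
  rwa [isCore_iff_isCoreBeads (card_parts_ofBeads_le B), betaSet_ofBeads rfl]

end CoreBeads

section Abacus

variable (ℓ : ℕ) [NeZero ℓ]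

/-- Position `q` on runner `r` of the `ℓ`-abacus is the natural number `q * ℓ + r`. -/
def abacusPosition : (Σ _ : Fin ℓ, ℕ) ≃ ℕ :=
  (Equiv.sigmaEquivProd _ _).trans ((Equiv.prodComm _ _).trans (Nat.divModEquiv ℓ).symm)

theorem abacusPosition_mk (r : Fin ℓ) (q : ℕ) : abacusPosition ℓ ⟨r, q⟩ = q * ℓ + r := rfl

/-- The `ℓ`-abacus: a set of beads is the same as the family of its sets of positions on the
`ℓ` runners. -/
noncomputable def abacus : Finset ℕ ≃ (Fin ℓ → Finset ℕ) where
  toFun B r := B.preimage (fun q => abacusPosition ℓ ⟨r, q⟩)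
    ((abacusPosition ℓ).injective.comp sigma_mk_injective).injOn
  invFun S := (Finset.univ.sigma S).map (abacusPosition ℓ).toEmbedding
  left_inv B := by
    ext x
    obtain ⟨⟨r, q⟩, rfl⟩ := (abacusPosition ℓ).surjective x
    simp
  right_inv S := by
    ext r q
    simp

variable {ℓ} {B : Finset ℕ} (S : Fin ℓ → Finset ℕ)

theorem mem_abacus {r : Fin ℓ} {q : ℕ} : q ∈ abacus ℓ B r ↔ q * ℓ + r ∈ B :=
  Finset.mem_preimage (f := fun q => abacusPosition ℓ ⟨r, q⟩)
    (hf := ((abacusPosition ℓ).injective.comp sigma_mk_injective).injOn)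

theorem card_abacus_symm : ((abacus ℓ).symm S).card = ∑ r, (S r).card :=
  (Finset.card_map _).trans (Finset.card_sigma _ _)

theorem sum_abacus_symm :
    ∑ x ∈ (abacus ℓ).symm S, x = ∑ r : Fin ℓ, ((∑ q ∈ S r, q) * ℓ + (S r).card * r) := by
  refine (Finset.sum_map _ _ _).trans ((Finset.sum_sigma _ _ _).trans ?_)
  refine Finset.sum_congr rfl fun r _ => ?_
  simp [abacusPosition_mk, Finset.sum_add_distrib, Finset.sum_mul]

theorem eq_range_card_of_succ_mem {B : Finset ℕ} (h : ∀ q, q + 1 ∈ B → q ∈ B) :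
    B = Finset.range B.card := by
  refine Finset.eq_of_subset_of_card_le (fun q hq => ?_) (Finset.card_range _).le
  have hdown : ∀ i ≤ q, i ∈ B := fun i hi => Nat.decreasingInduction (fun k _ => h k) hq hi
  have := Finset.card_le_card (fun i hi => hdown i (Finset.mem_range_succ_iff.1 hi) :
    Finset.range (q + 1) ⊆ B)
  rw [Finset.card_range] at this
  exact Finset.mem_range.2 this

theorem isCoreBeads_iff_abacus_eq_range :
    IsCoreBeads ℓ B ↔ ∀ r, abacus ℓ B r = Finset.range (abacus ℓ B r).card := by
  refine ⟨fun h r => eq_range_card_of_succ_mem fun q hq => ?_, fun h b hb hle => ?_⟩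
  · rw [mem_abacus] at hq ⊢
    have := h _ hq (by lia)
    rwa [show (q + 1) * ℓ + r - ℓ = q * ℓ + r by lia] at this
  · obtain ⟨b, rfl⟩ := Nat.exists_eq_add_of_le' hle
    obtain ⟨⟨r, q⟩, rfl⟩ := (abacusPosition ℓ).surjective b
    rw [abacusPosition_mk] at hb ⊢
    rw [Nat.add_sub_cancel, ← mem_abacus, h, Finset.mem_range]
    rw [add_right_comm, ← Nat.succ_mul, ← mem_abacus, h, Finset.mem_range] at hb
    lia

/-- Slide all beads on the runners down as far as possible. -/
def settle (S : Fin ℓ → Finset ℕ) (r : Fin ℓ) : Finset ℕ := Finset.range (S r).card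

theorem card_abacus_symm_settle : ((abacus ℓ).symm (settle S)).card = ((abacus ℓ).symm S).card := by
  simp only [card_abacus_symm, settle, Finset.card_range]

theorem isCoreBeads_abacus_symm_settle : IsCoreBeads ℓ ((abacus ℓ).symm (settle S)) := by
  simp [isCoreBeads_iff_abacus_eq_range, settle]

theorem size_ofBeads_abacus_symm :
    (ofBeads ((abacus ℓ).symm S)).1 =
      (ofBeads ((abacus ℓ).symm (settle S))).1 + ℓ * ∑ r, (ofBeads (S r)).1 := by
  have hS := sum_eq_size_ofBeads_add ((abacus ℓ).symm S)
  have hsettle := sum_eq_size_ofBeads_add ((abacus ℓ).symm (settle S))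
  rw [card_abacus_symm_settle, sum_abacus_symm] at hsettle
  have hsum : ∑ x ∈ (abacus ℓ).symm S, x = ℓ * ∑ r, (ofBeads (S r)).1 +
      ∑ r : Fin ℓ, ((∑ q ∈ settle S r, q) * ℓ + (settle S r).card * r) := by
    rw [sum_abacus_symm, Finset.mul_sum, ← Finset.sum_add_distrib]
    refine Finset.sum_congr rfl fun r _ => ?_
    rw [sum_eq_size_ofBeads_add (S r), settle, Finset.card_range]
    ring
  lia

end Abacus

section CoreQuotient

variable {ℓ : ℕ} [NeZero ℓ] (N : ℕ)

/-- The `ℓ`-core partitions, of all sizes. -/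
abbrev CorePartition (ℓ : ℕ) := {c : AnyPartition // IsCore ℓ c.2}

variable (ℓ) in
/-- The `ℓ`-core of a partition with at most `N` parts, computed with `N` beads. -/
noncomputable def coreOf (p : AnyPartition) : CorePartition ℓ :=
  ⟨ofBeads ((abacus ℓ).symm (settle (abacus ℓ (betaSet p.2 N)))),
    isCore_ofBeads (isCoreBeads_abacus_symm_settle _)⟩

/-- The `ℓ`-quotient of a partition with at most `N` parts, computed with `N` beads. -/
noncomputable def quotientOf (p : AnyPartition) (r : Fin ℓ) : AnyPartition :=
  ofBeads (abacus ℓ (betaSet p.2 N) r)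

/-- The number of beads on each runner of the `N`-bead abacus of `c`. -/
noncomputable def runnerLoad (c : AnyPartition) (r : Fin ℓ) : ℕ := (abacus ℓ (betaSet c.2 N) r).card

/-- The partition with a given `ℓ`-core and `ℓ`-quotient, computed with `N` beads. -/
noncomputable def ofCoreQuotient (c : AnyPartition) (μ : Fin ℓ → AnyPartition) : AnyPartition :=
  ofBeads ((abacus ℓ).symm fun r => betaSet (μ r).2 (runnerLoad N c r))

variable {N} {p c : AnyPartition} {μ : Fin ℓ → AnyPartition}

theorem size_eq_core_add_quotient (hp : p.2.parts.card ≤ N) :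
    p.1 = (coreOf ℓ N p).1.1 + ℓ * ∑ r : Fin ℓ, (quotientOf N p r).1 := by
  have := size_ofBeads_abacus_symm (abacus ℓ (betaSet p.2 N))
  rwa [Equiv.symm_apply_apply, ofBeads_betaSet hp] at this

theorem betaSet_coreOf (p : AnyPartition) :
    betaSet (coreOf ℓ N p).1.2 N = (abacus ℓ).symm (settle (abacus ℓ (betaSet p.2 N))) :=
  betaSet_ofBeads <| by rw [card_abacus_symm_settle, Equiv.symm_apply_apply, card_betaSet]

theorem ofCoreQuotient_coreOf_quotientOf (hp : p.2.parts.card ≤ N) :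
    ofCoreQuotient N (coreOf ℓ N p).1 (quotientOf (ℓ := ℓ) N p) = p := by
  have hload (r : Fin ℓ) : runnerLoad N (coreOf ℓ N p).1 r = (abacus ℓ (betaSet p.2 N) r).card := by
    rw [runnerLoad, betaSet_coreOf, Equiv.apply_symm_apply, settle, Finset.card_range]
  simp only [ofCoreQuotient, quotientOf, hload, betaSet_ofBeads]
  rw [Equiv.symm_apply_apply, ofBeads_betaSet hp]

theorem card_betaSet_runnerLoad (c : AnyPartition) (μ : Fin ℓ → AnyPartition) :
    ((abacus ℓ).symm fun r => betaSet (μ r).2 (runnerLoad N c r)).card = N := by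
  simp only [card_abacus_symm, card_betaSet, runnerLoad]
  rw [← card_abacus_symm, Equiv.symm_apply_apply, card_betaSet]

theorem abacus_betaSet_ofCoreQuotient (c : AnyPartition) (μ : Fin ℓ → AnyPartition) :
    abacus ℓ (betaSet (ofCoreQuotient N c μ).2 N) =
      fun r => betaSet (μ r).2 (runnerLoad N c r) := by
  rw [ofCoreQuotient, betaSet_ofBeads (card_betaSet_runnerLoad c μ), Equiv.apply_symm_apply]

theorem coreOf_ofCoreQuotient (hc : IsCore ℓ c.2) (hcN : c.2.parts.card ≤ N) :
    (coreOf ℓ N (ofCoreQuotient N c μ)).1 = c := by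
  have hsettle : settle (abacus ℓ (betaSet (ofCoreQuotient N c μ).2 N)) =
      abacus ℓ (betaSet c.2 N) := funext fun r => by
    rw [abacus_betaSet_ofCoreQuotient, settle, card_betaSet, runnerLoad,
      ← isCoreBeads_iff_abacus_eq_range.1 ((isCore_iff_isCoreBeads hcN).1 hc)]
  change ofBeads _ = c
  rw [hsettle, Equiv.symm_apply_apply, ofBeads_betaSet hcN]

theorem quotientOf_ofCoreQuotient (hμ : ∀ r, (μ r).2.parts.card ≤ runnerLoad N c r) :
    quotientOf N (ofCoreQuotient N c μ) = μ := funext fun r => by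
  rw [quotientOf, abacus_betaSet_ofCoreQuotient, ofBeads_betaSet (hμ r)]

theorem le_runnerLoad {n : ℕ} (hc : c.2.parts.card + ℓ * n ≤ N) (r : Fin ℓ) :
    n ≤ runnerLoad N c r := by
  have hsub : Finset.range n ⊆ abacus ℓ (betaSet c.2 N) r := fun q hq => by
    have hq : (q + 1) * ℓ ≤ n * ℓ := Nat.mul_le_mul_right _ (Finset.mem_range.1 hq)
    have hr := r.2
    refine mem_abacus.2 (mem_betaSet.2 ⟨N - 1 - (q * ℓ + r), by lia, ?_⟩)
    rw [nthPart_eq_zero (by lia)]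
    lia
  simpa [runnerLoad] using Finset.card_le_card hsub

theorem card_parts_ofCoreQuotient_le (c : AnyPartition) (μ : Fin ℓ → AnyPartition) :
    (ofCoreQuotient N c μ).2.parts.card ≤ N :=
  (card_parts_ofBeads_le _).trans_eq (card_betaSet_runnerLoad c μ)

theorem card_parts_le_runnerLoad {n : ℕ} (hn : c.1 + ℓ * ∑ r, (μ r).1 = n) (r : Fin ℓ) :
    (μ r).2.parts.card ≤ runnerLoad (n + ℓ * n) c r := by
  have hc := card_parts_le_size c.2
  have hr := Finset.single_le_sum (f := fun r => (μ r).1) (fun _ _ => Nat.zero_le _)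
    (Finset.mem_univ r)
  have hmul : ∑ r, (μ r).1 ≤ ℓ * ∑ r, (μ r).1 := Nat.le_mul_of_pos_left _ (NeZero.pos ℓ)
  calc (μ r).2.parts.card ≤ n := (card_parts_le_size _).trans (by lia)
    _ ≤ runnerLoad (n + ℓ * n) c r := le_runnerLoad (by lia) r

variable (ℓ) in
/-- A partition of `n` is determined by its `ℓ`-core and its `ℓ`-quotient. With `n + ℓ * n` beads,
every runner carries enough beads for a partition of size at most `n`. -/
noncomputable def coreQuotientFiberEquiv (n : ℕ) :
    {p : AnyPartition // p.1 = n} ≃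
      {x : CorePartition ℓ × (Fin ℓ → AnyPartition) // x.1.1.1 + ℓ * ∑ r, (x.2 r).1 = n} where
  toFun p := ⟨(coreOf ℓ (n + ℓ * n) p, quotientOf (n + ℓ * n) p), by
    rw [← size_eq_core_add_quotient (ℓ := ℓ)
      ((card_parts_le_size p.1.2).trans (by lia)), p.2]⟩
  invFun x := ⟨ofCoreQuotient (n + ℓ * n) x.1.1.1 x.1.2, by
    obtain ⟨⟨⟨c, hc⟩, μ⟩, rfl⟩ := x
    rw [size_eq_core_add_quotient (ℓ := ℓ) (card_parts_ofCoreQuotient_le _ _),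
      coreOf_ofCoreQuotient hc ((card_parts_le_size _).trans (by lia)),
      quotientOf_ofCoreQuotient (card_parts_le_runnerLoad rfl)]⟩
  left_inv p := Subtype.ext <|
    ofCoreQuotient_coreOf_quotientOf ((card_parts_le_size p.1.2).trans (by lia))
  right_inv := by
    rintro ⟨⟨⟨c, hc⟩, μ⟩, rfl⟩
    exact Subtype.ext (Prod.ext
      (Subtype.ext (coreOf_ofCoreQuotient hc ((card_parts_le_size _).trans (by lia))))
      (quotientOf_ofCoreQuotient (card_parts_le_runnerLoad rfl)))

theorem sizeEquiv_core_quotient (ℓ : ℕ) [NeZero ℓ] :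
    SizeEquiv (fun p : AnyPartition => p.1)
      (fun x : CorePartition ℓ × (Fin ℓ → AnyPartition) => x.1.1.1 + ℓ * ∑ r, (x.2 r).1) :=
  .of_fiber fun n => ⟨coreQuotientFiberEquiv ℓ n⟩

end CoreQuotient

section Families

variable {J C : Type*} [Zero C]

/-- The weighted size `∑ⱼ q j * s (w j)` of a finitely supported family `w` of objects of size
`s`, where an object placed at the index `j` counts with weight `q j`. -/
def weightedSize (q : J → ℕ) (s : C → ℕ) (w : J →₀ C) : ℕ := w.sum fun j c => q j * s c

/-- Reindexing a family along `Option (ι × J) ≃ J` separates the object at `none` from a finite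
tuple of families. -/
noncomputable def familyTowerEquiv {ι : Type*} [Finite ι] (e : Option (ι × J) ≃ J) :
    (J →₀ C) ≃ C × (ι → J →₀ C) :=
  (Finsupp.equivCongrLeft e.symm).trans <| Finsupp.optionEquiv.trans <|
    Equiv.prodCongr (Equiv.refl C) (Finsupp.curryEquiv.trans Finsupp.equivFunOnFinite)

variable {q : J → ℕ} {s : C → ℕ}

theorem weightedSize_eq_finsum (hs : s 0 = 0) (w : J →₀ C) :
    weightedSize q s w = ∑ᶠ j, q j * s (w j) := by
  refine (finsum_eq_sum_of_support_subset _ fun j hj => ?_).symm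
  simp only [Function.mem_support] at hj
  simp only [SetLike.mem_coe, Finsupp.mem_support_iff]
  rintro h
  simp [h, hs] at hj

theorem weightedSize_eq_zero (hq : ∀ j, q j ≠ 0) (hs : ∀ c, s c = 0 ↔ c = 0) {w : J →₀ C} :
    weightedSize q s w = 0 ↔ w = 0 := by
  simp only [weightedSize, Finsupp.sum, Finset.sum_eq_zero_iff, Nat.mul_eq_zero, hq, hs, false_or,
    Finsupp.mem_support_iff, Finsupp.ext_iff, Finsupp.zero_apply, not_imp_self]

theorem weightedSize_option {q : Option J → ℕ} (hs : s 0 = 0) (w : Option J →₀ C) :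
    weightedSize q s w =
      q none * s (w none) + weightedSize (fun j => q (some j)) s w.some := by
  rw [weightedSize, Finsupp.sum_of_support_subset w (s := Finset.insertNone w.some.support) ?_ _
    (by simp [hs]), Finset.sum_insertNone]
  · rfl
  · rintro (_ | j) hj
    · simp
    · simpa using hj

theorem weightedSize_curry {ι : Type*} [Fintype ι] {q : ι × J → ℕ} (w : ι × J →₀ C) :
    weightedSize q s w = ∑ r, weightedSize (fun j => q (r, j)) s (w.curry r) := by
  refine (Finsupp.sum_curry_index w fun r j c => q (r, j) * s c).symm.trans ?_
  exact Finsupp.sum_fintype _ _ fun _ => Finsupp.sum_zero_index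

theorem weightedSize_const_mul (k : ℕ) (w : J →₀ C) :
    weightedSize (fun j => k * q j) s w = k * weightedSize q s w := by
  simp only [weightedSize, Finsupp.sum, mul_assoc, Finset.mul_sum]

theorem weightedSize_familyTowerEquiv {ι : Type*} [Fintype ι] {e : Option (ι × J) ≃ J} {k : ℕ}
    (hs : s 0 = 0) (he₀ : q (e none) = 1) (he : ∀ r j, q (e (some (r, j))) = k * q j)
    (w : J →₀ C) :
    weightedSize q s w = s (familyTowerEquiv e w).1 +
      k * ∑ r, weightedSize q s ((familyTowerEquiv e w).2 r) := by
  let w' := Finsupp.equivCongrLeft e.symm w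
  calc weightedSize q s w = weightedSize (fun x => q (e x)) s w' := by
        simp [weightedSize, w', Finsupp.sum_equivMapDomain]
    _ = s (w' none) + ∑ r, weightedSize (fun j => k * q j) s (w'.some.curry r) := by
        simp only [weightedSize_option hs, weightedSize_curry, he₀, he, one_mul]
    _ = s (w' none) + k * ∑ r, weightedSize q s (w'.some.curry r) := by
        simp only [weightedSize_const_mul, Finset.mul_sum]

end Families

section Index

/-- A composition with one of `k ^ length` decorations is a list of decorated parts. -/
def decoratedCompositionEquiv (k : ℕ) :
    (Σ c : List ℕ+, Fin (k ^ c.length)) ≃ List (ℕ+ × Fin k) :=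
  (Equiv.sigmaCongrRight fun _ => finFunctionFinEquiv.symm).trans
  { toFun x := List.ofFn fun i => (x.1.get i, x.2 i)
    invFun l := ⟨l.map Prod.fst, fun i => (l.get (i.cast (List.length_map _))).2⟩
    left_inv := by
      rintro ⟨c, f⟩
      have hmap : (List.ofFn fun i => (c.get i, f i)).map Prod.fst = c := by
        rw [List.map_ofFn]
        exact List.ofFn_get c
      refine Sigma.ext hmap ((Fin.heq_fun_iff (by simp)).2 fun i => ?_)
      simp
    right_inv l := List.ext_getElem (by simp) (by simp) }

theorem map_fst_decoratedCompositionEquiv {k : ℕ} (x : Σ c : List ℕ+, Fin (k ^ c.length)) :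
    (decoratedCompositionEquiv k x).map Prod.fst = x.1 :=
  congrArg Sigma.fst ((decoratedCompositionEquiv k).symm_apply_apply x)

/-- A pair `(a, l)` other than `(0, [])` either has `a > 0`, and then arises from `(a - 1, l)`, or
has `a = 0` and `l = (b, i) :: l'`, and then arises from `(b - 1, l')` together with the
decoration `i`. -/
def towerIndexEquiv (k : ℕ) :
    Option (Fin (k + 1) × (ℕ × List (ℕ+ × Fin k))) ≃ ℕ × List (ℕ+ × Fin k) where
  toFun
    | none => (0, [])
    | some (r, a, l) => Fin.cases (a + 1, l) (fun i => (0, (a.succPNat, i) :: l)) r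
  invFun
    | (0, []) => none
    | (0, (b, i) :: l) => some (i.succ, b.natPred, l)
    | (a + 1, l) => some (0, a, l)
  left_inv := by
    rintro (_ | ⟨r, a, l⟩)
    · rfl
    · cases r using Fin.cases <;> simp
  right_inv := by
    rintro ⟨_ | a, _ | ⟨⟨b, i⟩, l⟩⟩ <;> simp

/-- The indices `(a, 𝔠, j)` of a family, for a fixed value of the sign index `x`. -/
abbrev FamilyIndex (ℓ : ℕ) := ℕ × Σ c : List ℕ+, Fin ((ℓ - 1) ^ c.length)

/-- The weight `ℓ ^ (a + |𝔠|)` of the index `(a, 𝔠, j)`. -/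
def indexWeight {ℓ : ℕ} (j : FamilyIndex ℓ) : ℕ := ℓ ^ (j.1 + csum j.2.1)

theorem exists_optionEquiv_familyIndex (ℓ : ℕ) [NeZero ℓ] :
    ∃ e : Option (Fin ℓ × FamilyIndex ℓ) ≃ FamilyIndex ℓ,
      indexWeight (e none) = 1 ∧
        ∀ r j, indexWeight (e (some (r, j))) = ℓ * indexWeight j := by
  obtain ⟨k, rfl⟩ := Nat.exists_eq_succ_of_ne_zero (NeZero.ne ℓ)
  let f : FamilyIndex (k + 1) ≃ ℕ × List (ℕ+ × Fin k) :=
    Equiv.prodCongr (Equiv.refl ℕ) (decoratedCompositionEquiv k)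
  let height (x : ℕ × List (ℕ+ × Fin k)) : ℕ := x.1 + csum (x.2.map Prod.fst)
  have weight_eq (j : FamilyIndex (k + 1)) : indexWeight j = (k + 1) ^ height (f j) :=
    congrArg (fun c => (k + 1) ^ (j.1 + csum c)) (map_fst_decoratedCompositionEquiv j.2).symm
  have height_succ (r : Fin (k + 1)) (x : ℕ × List (ℕ+ × Fin k)) :
      height (towerIndexEquiv k (some (r, x))) = height x + 1 := by
    cases r using Fin.cases <;> simp [height, towerIndexEquiv, csum] <;> ring
  refine ⟨(Equiv.optionCongr (Equiv.prodCongr (Equiv.refl _) f)).trans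
    ((towerIndexEquiv k).trans f.symm), ?_, fun r j => ?_⟩
  · rw [weight_eq, Equiv.trans_apply, Equiv.trans_apply, f.apply_symm_apply]
    rfl
  · rw [weight_eq, weight_eq, ← pow_succ', ← height_succ r (f j), Equiv.trans_apply,
      Equiv.trans_apply, f.apply_symm_apply]
    rfl

end Index

section FamilyPartition

theorem existsUnique_anyPartition_size_eq_zero : ∃! p : AnyPartition, p.1 = 0 := by
  refine ⟨⟨0, default⟩, rfl, ?_⟩
  rintro ⟨_, p⟩ rfl
  exact congrArg _ (Subsingleton.elim _ _)

theorem isCore_zero (ℓ : ℕ) (p : Nat.Partition 0) : IsCore ℓ p := by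
  intro N _ b hb _
  have hparts : p.parts.card ≤ 0 := card_parts_le_size p
  simp only [mem_betaSet, nthPart_eq_zero (hparts.trans (Nat.zero_le _))] at hb ⊢
  exact hb.elim fun i hi => ⟨N - 1 - (b - ℓ), by lia, by lia⟩

instance (ℓ : ℕ) : Zero (CorePartition ℓ) := ⟨⟨⟨0, default⟩, isCore_zero ℓ _⟩⟩

/-- The number of boxes of an `ℓ`-core. -/
def coreSize {ℓ : ℕ} (c : CorePartition ℓ) : ℕ := c.1.1

theorem coreSize_eq_zero {ℓ : ℕ} {c : CorePartition ℓ} : coreSize c = 0 ↔ c = 0 :=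
  ⟨fun h => Subtype.ext (existsUnique_anyPartition_size_eq_zero.unique h rfl), fun h => h ▸ rfl⟩

theorem sizeEquiv_family_anyPartition {ℓ : ℕ} (hℓ : 2 ≤ ℓ) :
    SizeEquiv (weightedSize (indexWeight (ℓ := ℓ)) (coreSize (ℓ := ℓ)))
      (fun p : AnyPartition => p.1) := by
  have : NeZero ℓ := ⟨by lia⟩
  obtain ⟨e, he₀, he⟩ := exists_optionEquiv_familyIndex ℓ
  obtain ⟨e', he'⟩ := sizeEquiv_core_quotient ℓ
  refine .of_tower hℓ (familyTowerEquiv e)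
    (weightedSize_familyTowerEquiv (coreSize_eq_zero.2 rfl) he₀ he) e' (fun p => (he' p).symm) ?_
    existsUnique_anyPartition_size_eq_zero
  have hzero (w : FamilyIndex ℓ →₀ CorePartition ℓ) :
      weightedSize indexWeight coreSize w = 0 ↔ w = 0 :=
    weightedSize_eq_zero (fun _ => pow_ne_zero _ (NeZero.ne ℓ)) fun _ => coreSize_eq_zero
  exact ⟨0, (hzero 0).2 rfl, fun w => (hzero w).1⟩

/-- The sum of a multiset of positive integers. -/
def partSum (m : Multiset ℕ+) : ℕ := (m.map fun x : ℕ+ => (x : ℕ)).sum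

theorem sizeEquiv_anyPartition_partSum : SizeEquiv (fun p : AnyPartition => p.1) partSum := by
  let f (p : AnyPartition) : Multiset ℕ+ :=
    p.2.parts.attach.map fun x => x.1.toPNat (p.2.parts_pos x.2)
  have map_f (p : AnyPartition) : (f p).map (fun x : ℕ+ => (x : ℕ)) = p.2.parts :=
    (Multiset.map_map _ _ _).trans (Multiset.attach_map_val _)
  have f_bijective : f.Bijective := by
    refine ⟨fun p q h => anyPartition_ext_parts ?_, fun m => ?_⟩
    · rw [← map_f p, ← map_f q, h]
    · let p : AnyPartition := ⟨_, m.map (fun x : ℕ+ => (x : ℕ)), fun hi => by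
        obtain ⟨a, _, rfl⟩ := Multiset.mem_map.1 hi
        exact a.2, rfl⟩
      exact ⟨p, Multiset.map_injective PNat.coe_injective (map_f p)⟩
  exact ⟨Equiv.ofBijective f f_bijective, fun p =>
    (congrArg Multiset.sum (map_f p)).trans p.2.parts_sum⟩

end FamilyPartition

section Weights

/-- The set `X` of the theorem: families of `ℓ`-cores indexed by the quadruples `(a, x, 𝔠, j)`, of
total size `n`. -/
def weights (ℓ n : ℕ) :
    Set ((ℕ × Fin 2 × Σ c : List ℕ+, Fin ((ℓ - 1) ^ c.length)) → AnyPartition) :=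
  { w | (∀ i, IsCore ℓ (w i).2) ∧
    { i | (w i).1 ≠ 0 }.Finite ∧
    ∑ᶠ i : ℕ × Fin 2 × Σ c : List ℕ+, Fin ((ℓ - 1) ^ c.length),
      ℓ ^ (i.1 + csum i.2.2.1) * (w i).1 = n }

/-- The quadruple `(a, x, 𝔠, j)` as the sign index `x` together with the triple `(a, 𝔠, j)`. -/
def weightIndexEquiv (ℓ : ℕ) :
    (ℕ × Fin 2 × Σ c : List ℕ+, Fin ((ℓ - 1) ^ c.length)) ≃ Fin 2 × FamilyIndex ℓ where
  toFun i := (i.2.1, i.1, i.2.2)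
  invFun i := (i.2.1, i.1, i.2.2)

variable {ℓ n : ℕ}

theorem weightedSize_eq_finsum_weightIndex (v : Fin 2 × FamilyIndex ℓ →₀ CorePartition ℓ) :
    weightedSize (fun i => indexWeight i.2) coreSize v =
      ∑ᶠ i : ℕ × Fin 2 × Σ c : List ℕ+, Fin ((ℓ - 1) ^ c.length),
        ℓ ^ (i.1 + csum i.2.2.1) * coreSize (v (weightIndexEquiv ℓ i)) :=
  (weightedSize_eq_finsum (coreSize_eq_zero.2 rfl) v).trans
    (finsum_comp_equiv (weightIndexEquiv ℓ)).symm

/-- A weight as a finitely supported family of cores. -/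
noncomputable def weightsEquiv (ℓ n : ℕ) :
    weights ℓ n ≃ {v : Fin 2 × FamilyIndex ℓ →₀ CorePartition ℓ //
      weightedSize (fun i => indexWeight i.2) coreSize v = n} where
  toFun w :=
    ⟨Finsupp.ofSupportFinite (fun i => ⟨w.1 ((weightIndexEquiv ℓ).symm i), w.2.1 _⟩) <|
      (w.2.2.1.preimage (weightIndexEquiv ℓ).symm.injective.injOn).subset fun _ h =>
        coreSize_eq_zero.not.2 h,
      (weightedSize_eq_finsum_weightIndex _).trans w.2.2.2⟩
  invFun v := ⟨fun i => (v.1 (weightIndexEquiv ℓ i)).1, fun _ => (v.1 _).2,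
    (v.1.hasFiniteSupport.preimage (weightIndexEquiv ℓ).injective.injOn).subset fun _ h =>
      coreSize_eq_zero.not.1 h,
    (weightedSize_eq_finsum_weightIndex v.1).symm.trans v.2⟩

theorem weightsEquiv_apply (w : weights ℓ n) (i : Fin 2 × FamilyIndex ℓ) :
    ((weightsEquiv ℓ n w).1 i).1 = w.1 ((weightIndexEquiv ℓ).symm i) := rfl

theorem comp_flipIdx_eq_self_iff (w : weights ℓ n) :
    w.1 ∘ flipIdx ℓ = w.1 ↔
      (weightsEquiv ℓ n w).1.curry 0 = (weightsEquiv ℓ n w).1.curry 1 := by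
  simp only [Finsupp.ext_iff, Finsupp.curry_apply, Subtype.ext_iff, weightsEquiv_apply]
  refine ⟨fun h j => congrFun h (j.1, 1, j.2), fun h => funext fun ⟨a, x, c⟩ => ?_⟩
  fin_cases x
  · exact (h (a, c)).symm
  · exact h (a, c)

theorem exists_weights_equiv (hℓ : 2 ≤ ℓ) (n : ℕ) :
    ∃ e : weights ℓ n ≃ {x : Multiset ℕ+ × Multiset ℕ+ // partSum x.1 + partSum x.2 = n},
      ∀ w, w.1 ∘ flipIdx ℓ = w.1 ↔ (e w).1.1 = (e w).1.2 := by
  obtain ⟨e, he⟩ := (sizeEquiv_family_anyPartition hℓ).trans sizeEquiv_anyPartition_partSum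
  let f : (Fin 2 × FamilyIndex ℓ →₀ CorePartition ℓ) ≃ Multiset ℕ+ × Multiset ℕ+ :=
    Finsupp.curryEquiv.trans <| Finsupp.equivFunOnFinite.trans <|
      (finTwoArrowEquiv _).trans (Equiv.prodCongr e e)
  have size_f (v : Fin 2 × FamilyIndex ℓ →₀ CorePartition ℓ) :
      weightedSize (fun i => indexWeight i.2) coreSize v = partSum (f v).1 + partSum (f v).2 := by
    rw [weightedSize_curry, Fin.sum_univ_two]
    exact congrArg₂ _ (he _).symm (he _).symm
  refine ⟨(weightsEquiv ℓ n).trans (f.subtypeEquiv fun v => by rw [size_f]), fun w => ?_⟩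
  rw [comp_flipIdx_eq_self_iff]
  exact e.apply_eq_iff_eq.symm

theorem ncard_weights (hℓ : 2 ≤ ℓ) (n : ℕ) :
    (weights ℓ n).ncard =
      Nat.card {x : Multiset ℕ+ × Multiset ℕ+ // partSum x.1 + partSum x.2 = n} :=
  (exists_weights_equiv hℓ n).elim fun e _ => Nat.card_congr e

theorem ncard_fixed_weights (hℓ : 2 ≤ ℓ) (n : ℕ) :
    Set.ncard {w ∈ weights ℓ n | w ∘ flipIdx ℓ = w} =
      Nat.card {m : Multiset ℕ+ // 2 * partSum m = n} := by
  obtain ⟨e, he⟩ := exists_weights_equiv hℓ n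
  exact Nat.card_congr <| calc
    {w // w ∈ weights ℓ n ∧ w ∘ flipIdx ℓ = w} ≃ {w : weights ℓ n // w.1 ∘ flipIdx ℓ = w.1} :=
      (Equiv.subtypeSubtypeEquivSubtypeInter _ fun w => w ∘ flipIdx ℓ = w).symm
    _ ≃ {x : {x : Multiset ℕ+ × Multiset ℕ+ // partSum x.1 + partSum x.2 = n} // x.1.1 = x.1.2} :=
      e.subtypeEquiv he
    _ ≃ {m : Multiset ℕ+ // 2 * partSum m = n} :=
      { toFun x := ⟨x.1.1.1, by simpa only [two_mul, x.2] using x.1.2⟩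
        invFun m := ⟨⟨(m.1, m.1), by rw [← two_mul, m.2]⟩, rfl⟩
        left_inv x := Subtype.ext (Subtype.ext (Prod.ext rfl x.2))
        right_inv _ := rfl }

end Weights

section SignedLabels

/-- The signed cycle type of a signed permutation is a multiset of labels `(m, ε)`, one for each
cycle, where `m` is the length of the cycle and `ε` the product of the signs along it. -/
abbrev SignedType := Multiset (ℕ+ × ℤˣ)

namespace SignedType

/-- The number of points of a signed permutation of signed cycle type `M`. -/
def size (M : SignedType) : ℕ := (M.map fun x => (x.1 : ℕ)).sum

/-- The product of all the signs of a signed permutation of signed cycle type `M`. -/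
def sign (M : SignedType) : ℤˣ := (M.map Prod.snd).prod

/-- All cycles are positive and of even length: these are the signed cycle types which belong to
two conjugacy classes of the Weyl group of type `D`. -/
def IsSplit (M : SignedType) : Prop := ∀ x ∈ M, x.2 = 1 ∧ Even (x.1 : ℕ)

theorem size_cons (x : ℕ+ × ℤˣ) (M : SignedType) : size (x ::ₘ M) = x.1 + size M := by
  simp [size]

theorem sign_cons (x : ℕ+ × ℤˣ) (M : SignedType) : sign (x ::ₘ M) = x.2 * sign M := by
  simp [sign]

theorem le_size_of_mem {x : ℕ+ × ℤˣ} {M : SignedType} (hx : x ∈ M) : (x.1 : ℕ) ≤ M.size :=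
  Multiset.le_sum_of_mem (Multiset.mem_map_of_mem (fun x : ℕ+ × ℤˣ => (x.1 : ℕ)) hx)

theorem card_le_size (M : SignedType) : Multiset.card M ≤ M.size := by
  simpa [size] using Multiset.card_nsmul_le_sum (s := M.map fun x => (x.1 : ℕ)) (a := 1)
    (Multiset.forall_mem_map_iff.2 fun x _ => x.1.pos)

theorem finite_size_eq (n : ℕ) : {M : SignedType | M.size = n}.Finite := by
  classical
  let labels : Finset (ℕ+ × ℤˣ) := Finset.Icc 1 n.succPNat ×ˢ Finset.univ
  refine (Set.finite_Iic (n • labels.val)).subset fun M hM => ?_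
  have hM : size M = n := hM
  refine Multiset.le_iff_count.2 fun x => ?_
  by_cases hx : x ∈ M
  · have hle := le_size_of_mem hx
    have hmem : x ∈ labels := Finset.mem_product.2 ⟨Finset.mem_Icc.2
      ⟨one_le, show (x.1 : ℕ) ≤ n + 1 by lia⟩, Finset.mem_univ _⟩
    rw [Multiset.count_nsmul, Multiset.count_eq_one_of_mem labels.nodup hmem, mul_one]
    exact (Multiset.count_le_card _ _).trans (hM ▸ card_le_size M)
  · simp [Multiset.count_eq_zero_of_notMem hx]

/-- The signed cycle types of size `n`. -/
noncomputable def ofSize (n : ℕ) : Finset SignedType := (finite_size_eq n).toFinset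

theorem mem_ofSize {n : ℕ} {M : SignedType} : M ∈ ofSize n ↔ M.size = n :=
  (finite_size_eq n).mem_toFinset

/-- Separation of the positive and the negative cycles. -/
def splitSignEquiv : SignedType ≃ Multiset ℕ+ × Multiset ℕ+ where
  toFun M := ((M.filter (·.2 = 1)).map Prod.fst, (M.filter (·.2 = -1)).map Prod.fst)
  invFun x := x.1.map (·, 1) + x.2.map (·, -1)
  left_inv M := by
    induction M using Multiset.induction with
    | empty => rfl
    | cons x M ih =>
      obtain ⟨m, ε⟩ := x
      obtain rfl | rfl := Int.units_eq_one_or ε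
      · simpa using ih
      · simpa using ih
  right_inv x := by
    simp [Multiset.filter_map]

theorem size_splitSignEquiv_symm (x : Multiset ℕ+ × Multiset ℕ+) :
    size (splitSignEquiv.symm x) = partSum x.1 + partSum x.2 := by
  simp [splitSignEquiv, size, partSum]

/-- `M` has a positive cycle of length `m` or an odd number of negative ones. -/
def IsActive (M : SignedType) (m : ℕ+) : Prop := Odd (M.count (m, -1)) ∨ (m, 1) ∈ M

open Classical in
/-- Change the sign of one cycle of length `m`, in the direction which can be undone by changing
the sign of a cycle of length `m` again. -/
noncomputable def toggleAt (m : ℕ+) (M : SignedType) : SignedType :=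
  if Odd (M.count (m, -1)) then (m, 1) ::ₘ M.erase (m, -1) else (m, -1) ::ₘ M.erase (m, 1)

variable {m : ℕ+} {M : SignedType}

theorem toggleAt_of_odd (h : Odd (M.count (m, -1))) :
    toggleAt m M = (m, 1) ::ₘ M.erase (m, -1) := if_pos h

theorem toggleAt_of_not_odd (h : ¬ Odd (M.count (m, -1))) :
    toggleAt m M = (m, -1) ::ₘ M.erase (m, 1) := if_neg h

theorem IsActive.exists_cons (h : M.IsActive m) :
    ∃ N ε, M = (m, ε) ::ₘ N ∧ toggleAt m M = (m, -ε) ::ₘ N := by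
  by_cases ho : Odd (M.count (m, -1))
  · exact ⟨M.erase (m, -1), -1, (Multiset.cons_erase (Multiset.count_pos.1 ho.pos)).symm,
      by rw [toggleAt_of_odd ho, neg_neg]⟩
  · exact ⟨M.erase (m, 1), 1, (Multiset.cons_erase (h.resolve_left ho)).symm,
      toggleAt_of_not_odd ho⟩

theorem IsActive.size_toggleAt (h : M.IsActive m) : (toggleAt m M).size = M.size := by
  obtain ⟨N, ε, rfl, hN⟩ := h.exists_cons
  rw [hN, size_cons, size_cons]

theorem IsActive.sign_toggleAt (h : M.IsActive m) : (toggleAt m M).sign = -M.sign := by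
  obtain ⟨N, ε, rfl, hN⟩ := h.exists_cons
  rw [hN, sign_cons, sign_cons, neg_mul]

theorem IsActive.toggleAt_toggleAt (h : M.IsActive m) : toggleAt m (toggleAt m M) = M := by
  by_cases ho : Odd (M.count (m, -1))
  · have hmem : (m, -1) ∈ M := Multiset.count_pos.1 ho.pos
    have heven : ¬ Odd ((toggleAt m M).count (m, -1)) := by
      rw [toggleAt_of_odd ho, Multiset.count_cons_of_ne (by simp), Multiset.count_erase_self]
      exact Nat.not_odd_iff_even.2 (Nat.Odd.sub_odd ho odd_one)
    rw [toggleAt_of_not_odd heven, toggleAt_of_odd ho, Multiset.erase_cons_head,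
      Multiset.cons_erase hmem]
  · have hodd : Odd ((toggleAt m M).count (m, -1)) := by
      rw [toggleAt_of_not_odd ho, Multiset.count_cons_self, Multiset.count_erase_of_ne (by simp)]
      exact (Nat.not_odd_iff_even.1 ho).add_one
    rw [toggleAt_of_odd hodd, toggleAt_of_not_odd ho, Multiset.erase_cons_head,
      Multiset.cons_erase (h.resolve_left ho)]

theorem IsActive.toggleAt_iff (h : M.IsActive m) {k : ℕ+} :
    (toggleAt m M).IsActive k ↔ M.IsActive k := by
  obtain rfl | hk := eq_or_ne k m
  · refine iff_of_true ?_ h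
    by_cases ho : Odd (M.count (k, -1))
    · exact .inr (by simp [toggleAt_of_odd ho])
    · refine .inl ?_
      rw [toggleAt_of_not_odd ho, Multiset.count_cons_self, Multiset.count_erase_of_ne (by simp)]
      exact (Nat.not_odd_iff_even.1 ho).add_one
  · obtain ⟨N, ε, rfl, hN⟩ := h.exists_cons
    simp [hN, IsActive, hk]

open Classical in
/-- Toggling at the least active length is an involution on the signed cycle types with an active
length. -/
noncomputable def toggle (M : SignedType) (h : ∃ m, M.IsActive m) : SignedType :=
  toggleAt (PNat.find h) M

theorem exists_isActive_toggle (h : ∃ m, M.IsActive m) : ∃ m, (M.toggle h).IsActive m := by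
  classical
  exact ⟨_, (PNat.find_spec h).toggleAt_iff.2 (PNat.find_spec h)⟩

theorem toggle_toggle (h : ∃ m, M.IsActive m) :
    (M.toggle h).toggle (exists_isActive_toggle h) = M := by
  classical
  have hm := PNat.find_spec h
  have hfind : PNat.find (exists_isActive_toggle h) = PNat.find h := by
    refine le_antisymm (PNat.find_min' _ (hm.toggleAt_iff.2 hm)) (PNat.find_min' _ ?_)
    exact hm.toggleAt_iff.1 (PNat.find_spec (exists_isActive_toggle h))
  rw [toggle, hfind]
  exact hm.toggleAt_toggleAt

open Classical in
theorem sum_sign_isActive (n : ℕ) :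
    ∑ M ∈ ofSize n with ∃ m, M.IsActive m, (M.sign : ℤ) = 0 := by
  refine Finset.sum_involution (fun M hM => M.toggle (Finset.mem_filter.1 hM).2)
    (fun M hM => ?_) (fun M hM _ hfix => ?_) (fun M hM => ?_) fun M hM => toggle_toggle _
  all_goals have hactive := PNat.find_spec (Finset.mem_filter.1 hM).2
  · simp [toggle, hactive.sign_toggleAt]
  · have hsign := hactive.sign_toggleAt
    rw [show toggleAt _ M = M from hfix] at hsign
    exact units_ne_neg_self _ hsign
  · rw [Finset.mem_filter, mem_ofSize, toggle, hactive.size_toggleAt]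
    exact ⟨mem_ofSize.1 (Finset.mem_filter.1 hM).1, exists_isActive_toggle _⟩

theorem not_isActive_iff : (¬ ∃ m, M.IsActive m) ↔
    ∃ c : Multiset ℕ+, M = splitSignEquiv.symm (0, 2 • c) := by
  obtain ⟨⟨a, b⟩, rfl⟩ := splitSignEquiv.symm.surjective M
  have hactive (m : ℕ+) :
      IsActive (splitSignEquiv.symm (a, b)) m ↔ Odd (b.count m) ∨ m ∈ a := by
    have hinj : Function.Injective fun m : ℕ+ => (m, (-1 : ℤˣ)) := fun _ _ => congrArg Prod.fst
    simp [IsActive, splitSignEquiv, Multiset.count_map_eq_count' _ _ hinj]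
  simp only [hactive, EmbeddingLike.apply_eq_iff_eq, Prod.mk.injEq, not_exists, not_or,
    Nat.not_odd_iff_even, exists_and_left, forall_and, ← Multiset.eq_zero_iff_forall_notMem]
  rw [and_comm]
  refine and_congr_right fun _ => ⟨fun h => ?_, ?_⟩
  · exact Multiset.exists_smul_of_dvd_count b fun m _ => (h m).two_dvd
  · rintro ⟨c, rfl⟩ m
    simp

theorem isSplit_iff : M.IsSplit ↔ ∃ c : Multiset ℕ+, M = c.map fun m => (2 * m, 1) := by
  refine ⟨fun h => ?_, ?_⟩
  · let half (x : ℕ+ × ℤˣ) : ℕ+ := x.1.divExact 2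
    refine ⟨M.map half, ?_⟩
    rw [Multiset.map_map]
    refine (Multiset.map_id' M).symm.trans (Multiset.map_congr rfl fun x hx => ?_)
    exact Prod.ext (PNat.mul_div_exact (PNat.dvd_iff.2 (h x hx).2.two_dvd)).symm (h x hx).1
  · rintro ⟨c, rfl⟩
    simp [IsSplit]

theorem card_eq_of_range {g : Multiset ℕ+ → SignedType} (hg : g.Injective)
    (hsize : ∀ c, (g c).size = 2 * partSum c) {P : SignedType → Prop}
    (hP : ∀ M, P M ↔ ∃ c, M = g c) (n : ℕ) :
    Nat.card {M : SignedType // M.size = n ∧ P M} =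
      Nat.card {c : Multiset ℕ+ // 2 * partSum c = n} := by
  refine (Nat.card_eq_of_bijective (fun c => ⟨g c.1, by rw [hsize, c.2], (hP _).2 ⟨_, rfl⟩⟩)
    ⟨fun c d h => Subtype.ext (hg (congrArg Subtype.val h)), ?_⟩).symm
  rintro ⟨M, hM, hPM⟩
  obtain ⟨c, rfl⟩ := (hP M).1 hPM
  exact ⟨⟨c, by rw [← hsize, hM]⟩, rfl⟩

theorem card_isSplit (n : ℕ) : Nat.card {M : SignedType // M.size = n ∧ M.IsSplit} =
    Nat.card {c : Multiset ℕ+ // 2 * partSum c = n} := by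
  refine card_eq_of_range (Multiset.map_injective fun a b h => ?_) (fun c => ?_)
    (fun _ => isSplit_iff) n
  · exact mul_left_cancel (congrArg Prod.fst h)
  · simp [size, partSum, Function.comp_def, Multiset.sum_map_mul_left]

theorem card_not_isActive (n : ℕ) :
    Nat.card {M : SignedType // M.size = n ∧ ¬ ∃ m, M.IsActive m} =
      Nat.card {c : Multiset ℕ+ // 2 * partSum c = n} := by
  refine card_eq_of_range (fun a b h => ?_) (fun c => ?_) (fun _ => not_isActive_iff) n
  · have h2 : 2 • a = 2 • b := congrArg Prod.snd (splitSignEquiv.symm.injective h)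
    exact nsmul_right_injective two_ne_zero h2
  · rw [size_splitSignEquiv_symm, partSum, partSum, Multiset.map_nsmul, Multiset.sum_nsmul]
    simp [partSum]

theorem card_pairs_eq_card_ofSize (n : ℕ) :
    Nat.card {x : Multiset ℕ+ × Multiset ℕ+ // partSum x.1 + partSum x.2 = n} =
      (ofSize n).card := by
  rw [← Nat.subtype_card (ofSize n) fun M => mem_ofSize]
  exact Nat.card_congr (splitSignEquiv.symm.subtypeEquiv fun x => by
    rw [size_splitSignEquiv_symm])

theorem sign_of_not_isActive (h : ¬ ∃ m, M.IsActive m) : M.sign = 1 := by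
  obtain ⟨c, rfl⟩ := not_isActive_iff.1 h
  simp [splitSignEquiv, sign]

open Classical in
theorem sum_sign (n : ℕ) :
    ∑ M ∈ ofSize n, (M.sign : ℤ) = Nat.card {c : Multiset ℕ+ // 2 * partSum c = n} := by
  have hinactive : ∑ M ∈ ofSize n with ¬ ∃ m, M.IsActive m, (M.sign : ℤ) =
      Nat.card {c : Multiset ℕ+ // 2 * partSum c = n} := by
    rw [← card_not_isActive, Nat.subtype_card {M ∈ ofSize n | ¬ ∃ m, M.IsActive m} fun M => by
      rw [Finset.mem_filter, mem_ofSize], Finset.card_eq_sum_ones, Nat.cast_sum]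
    refine Finset.sum_congr rfl fun M hM => ?_
    simp [sign_of_not_isActive (Finset.mem_filter.1 hM).2]
  rw [← Finset.sum_filter_add_sum_filter_not _ fun M : SignedType => ∃ m, M.IsActive m,
    sum_sign_isActive, zero_add, hinactive]

open Classical in
theorem card_sign_eq_one (n : ℕ) : Nat.card {M : SignedType // M.size = n ∧ M.sign = 1} =
    {M ∈ ofSize n | M.sign = 1}.card :=
  Nat.subtype_card _ fun M => by rw [Finset.mem_filter, mem_ofSize]

theorem two_mul_card_sign_eq_one (n : ℕ) :
    2 * Nat.card {M : SignedType // M.size = n ∧ M.sign = 1} =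
      (ofSize n).card + Nat.card {c : Multiset ℕ+ // 2 * partSum c = n} := by
  classical
  have hterm (M : SignedType) : (M.sign : ℤ) = 2 * (if M.sign = 1 then 1 else 0) - 1 := by
    obtain h | h := Int.units_eq_one_or M.sign <;> simp [h]
  have hsum := sum_sign n
  simp only [hterm, Finset.sum_sub_distrib, ← Finset.mul_sum, Finset.sum_boole, Finset.sum_const,
    nsmul_eq_mul, mul_one] at hsum
  rw [card_sign_eq_one]
  lia

theorem two_mul_add_half_sub (n : ℕ) :
    2 * Nat.card {c : Multiset ℕ+ // 2 * partSum c = n} +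
      (Nat.card {x : Multiset ℕ+ × Multiset ℕ+ // partSum x.1 + partSum x.2 = n} -
        Nat.card {c : Multiset ℕ+ // 2 * partSum c = n}) / 2 =
    Nat.card {M : SignedType // M.size = n ∧ M.sign = 1} +
      Nat.card {M : SignedType // M.size = n ∧ M.IsSplit} := by
  classical
  have hcard := two_mul_card_sign_eq_one n
  have hle : Nat.card {M : SignedType // M.size = n ∧ M.sign = 1} ≤ (ofSize n).card :=
    card_sign_eq_one n ▸ Finset.card_filter_le _ _
  rw [card_pairs_eq_card_ofSize, card_isSplit]
  lia

end SignedType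

end SignedLabels

theorem val_add_one_eq_mod {m : ℕ} [NeZero m] (a : ZMod m) : (a + 1).val = (a.val + 1) % m := by
  rw [ZMod.val_add, ZMod.val_one_eq_one_mod, Nat.add_mod_mod]

theorem val_add_one_of_eq_zero {m : ℕ} [NeZero m] {a : ZMod m} (ha : a + 1 = 0) :
    a.val + 1 = m := by
  have hmod := val_add_one_eq_mod a
  rw [ha, ZMod.val_zero] at hmod
  exact Nat.le_antisymm a.val_lt (Nat.le_of_dvd a.val.succ_pos (Nat.dvd_of_mod_eq_zero hmod.symm))

theorem val_add_one_of_ne_zero {m : ℕ} [NeZero m] {a : ZMod m} (ha : a + 1 ≠ 0) :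
    (a + 1).val = a.val + 1 := by
  have hmod := val_add_one_eq_mod a
  refine hmod.trans (Nat.mod_eq_of_lt (lt_of_le_of_ne a.val_lt fun h => ha ?_))
  rwa [h, Nat.mod_self, ZMod.val_eq_zero] at hmod

theorem exists_equiv_comp_eq {ι κ γ : Type*} [Fintype ι] [Fintype κ] {f : ι → γ} {g : κ → γ}
    (h : Finset.univ.val.map f = Finset.univ.val.map g) : ∃ e : ι ≃ κ, g ∘ e = f := by
  classical
  have hfiber (c : γ) : Nonempty ({i // f i = c} ≃ {k // g k = c}) := by
    have hcount := congrArg (Multiset.count c) h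
    rw [Multiset.count_map, Multiset.count_map] at hcount
    rw [← Fintype.card_eq, Fintype.card_subtype, Fintype.card_subtype]
    simpa only [Finset.card_def, Finset.filter_val, eq_comm (a := c)] using hcount
  exact ⟨Equiv.ofFiberEquiv fun c => (hfiber c).some, funext (Equiv.ofFiberEquiv_map _)⟩

/-- A signed permutation of `α`: it moves the basis vector of `x` to `sign x` times the basis
vector of `perm x`. -/
@[ext]
structure SignedPerm (α : Type*) where
  perm : Equiv.Perm α
  sign : α → ℤˣ

namespace SignedPerm

section Group

variable {α : Type*}

instance : Mul (SignedPerm α) :=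
  ⟨fun P Q => ⟨P.perm * Q.perm, fun x => P.sign (Q.perm x) * Q.sign x⟩⟩

instance : One (SignedPerm α) := ⟨⟨1, 1⟩⟩

instance : Inv (SignedPerm α) := ⟨fun P => ⟨P.perm⁻¹, fun x => P.sign (P.perm⁻¹ x)⟩⟩

theorem perm_mul (P Q : SignedPerm α) : (P * Q).perm = P.perm * Q.perm := rfl

theorem sign_mul (P Q : SignedPerm α) (x : α) :
    (P * Q).sign x = P.sign (Q.perm x) * Q.sign x := rfl

theorem perm_one : (1 : SignedPerm α).perm = 1 := rfl

theorem sign_one (x : α) : (1 : SignedPerm α).sign x = 1 := rfl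

instance : Group (SignedPerm α) :=
  Group.ofLeftAxioms (fun _ _ _ => SignedPerm.ext rfl (funext fun _ => (mul_assoc _ _ _)))
    (fun _ => SignedPerm.ext rfl (funext fun _ => one_mul _))
    fun P => SignedPerm.ext (inv_mul_cancel P.perm) (funext fun x =>
      (congrArg (P.sign · * P.sign x) (P.perm.symm_apply_apply x)).trans (Int.units_mul_self _))

instance [Finite α] : Finite (SignedPerm α) :=
  Finite.of_injective (fun P => (P.perm, P.sign)) fun _ _ h =>
    SignedPerm.ext (congrArg Prod.fst h) (congrArg Prod.snd h)

/-- The product of all signs, the character whose kernel is the Weyl group of type `D`. -/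
def totalSign [Fintype α] : SignedPerm α →* ℤˣ where
  toFun P := ∏ x, P.sign x
  map_one' := Finset.prod_const_one
  map_mul' P Q := by
    simp only [sign_mul, Finset.prod_mul_distrib, Equiv.prod_comp Q.perm P.sign]

theorem totalSign_apply [Fintype α] (P : SignedPerm α) : totalSign P = ∏ x, P.sign x := rfl

end Group

/-- An isomorphism of signed permutations `P` and `Q`: a bijection of the underlying sets and a
choice of signs `twist` which together intertwine `P` and `Q`. -/
structure Iso {α β : Type*} (P : SignedPerm α) (Q : SignedPerm β) extends α ≃ β where
  twist : α → ℤˣ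
  map_perm (x : α) : toEquiv (P.perm x) = Q.perm (toEquiv x)
  twist_perm (x : α) : twist (P.perm x) * P.sign x = Q.sign (toEquiv x) * twist x

section Iso

variable {α β γ : Type*} {P : SignedPerm α} {Q : SignedPerm β} {R : SignedPerm γ}

namespace Iso

/-- The inverse of an isomorphism; a sign is its own inverse. -/
def symm (f : Iso P Q) : Iso Q P where
  toEquiv := f.toEquiv.symm
  twist y := f.twist (f.toEquiv.symm y)
  map_perm y := by rw [Equiv.symm_apply_eq, f.map_perm, Equiv.apply_symm_apply]
  twist_perm y := by
    obtain ⟨x, rfl⟩ := f.toEquiv.surjective y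
    rw [← f.map_perm, Equiv.symm_apply_apply, Equiv.symm_apply_apply]
    calc f.twist (P.perm x) * Q.sign (f.toEquiv x)
        = f.twist (P.perm x) * P.sign x * P.sign x * Q.sign (f.toEquiv x) := by
          rw [mul_assoc (f.twist _), Int.units_mul_self, mul_one]
      _ = Q.sign (f.toEquiv x) * Q.sign (f.toEquiv x) * (P.sign x * f.twist x) := by
          rw [f.twist_perm]; ac_rfl
      _ = P.sign x * f.twist x := by rw [Int.units_mul_self, one_mul]

/-- The composition of isomorphisms. -/
def trans (f : Iso P Q) (g : Iso Q R) : Iso P R where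
  toEquiv := f.toEquiv.trans g.toEquiv
  twist x := g.twist (f.toEquiv x) * f.twist x
  map_perm x := by simp only [Equiv.trans_apply, f.map_perm, g.map_perm]
  twist_perm x := by
    rw [mul_assoc, f.twist_perm, f.map_perm, ← mul_assoc, g.twist_perm, mul_assoc]
    rfl

/-- The product of the twists of an isomorphism. -/
def twistSign [Fintype α] (f : Iso P Q) : ℤˣ := ∏ x, f.twist x

theorem twistSign_symm [Fintype α] [Fintype β] (f : Iso P Q) :
    f.symm.twistSign = f.twistSign := Equiv.prod_comp f.toEquiv.symm f.twist

theorem twistSign_trans [Fintype α] [Fintype β] (f : Iso P Q) (g : Iso Q R) :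
    (f.trans g).twistSign = g.twistSign * f.twistSign := by
  simp only [twistSign, trans, Finset.prod_mul_distrib, Equiv.prod_comp f.toEquiv g.twist]

theorem totalSign_eq [Fintype α] [Fintype β] (f : Iso P Q) : totalSign P = totalSign Q := by
  have h : ∏ x, (f.twist (P.perm x) * P.sign x) = ∏ x, (Q.sign (f.toEquiv x) * f.twist x) :=
    Finset.prod_congr rfl fun x _ => f.twist_perm x
  rw [Finset.prod_mul_distrib, Finset.prod_mul_distrib, Equiv.prod_comp P.perm,
    Equiv.prod_comp f.toEquiv, mul_comm] at h
  exact mul_right_cancel h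

theorem map_iterate (f : Iso P Q) (k : ℕ) (x : α) :
    f.toEquiv (P.perm^[k] x) = Q.perm^[k] (f.toEquiv x) :=
  Function.Semiconj.iterate_right f.map_perm k x

theorem minimalPeriod_eq (f : Iso P Q) (x : α) :
    Function.minimalPeriod Q.perm (f.toEquiv x) = Function.minimalPeriod P.perm x := by
  refine Function.minimalPeriod_eq_minimalPeriod_iff.2 fun k => ?_
  rw [Function.IsPeriodicPt, Function.IsFixedPt, ← f.map_iterate, f.toEquiv.injective.eq_iff]
  rfl

end Iso

theorem exists_iso_twistSign_eq_iff [Fintype α] {P Q : SignedPerm α} {ε : ℤˣ} :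
    (∃ f : Iso P Q, f.twistSign = ε) ↔ ∃ c, SemiconjBy c P Q ∧ totalSign c = ε := by
  constructor
  · rintro ⟨f, hf⟩
    exact ⟨⟨f.toEquiv, f.twist⟩,
      SignedPerm.ext (Equiv.ext f.map_perm) (funext f.twist_perm), hf⟩
  · rintro ⟨c, hc, rfl⟩
    exact ⟨⟨c.perm, c.sign, DFunLike.congr_fun (congrArg perm hc), congrFun (congrArg sign hc)⟩,
      rfl⟩

end Iso

section Label

variable {α β : Type*}

/-- The product of the first `k` signs along the orbit of `x`. -/
def orbitSign (P : SignedPerm α) (x : α) (k : ℕ) : ℤˣ := ∏ i ∈ Finset.range k, P.sign (P.perm^[i] x)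

theorem orbitSign_zero (P : SignedPerm α) (x : α) : P.orbitSign x 0 = 1 := rfl

theorem orbitSign_succ (P : SignedPerm α) (x : α) (k : ℕ) :
    P.orbitSign x (k + 1) = P.orbitSign x k * P.sign (P.perm^[k] x) :=
  Finset.prod_range_succ _ _

theorem Iso.twist_iterate {P : SignedPerm α} {Q : SignedPerm β} (f : Iso P Q) (x : α) (k : ℕ) :
    f.twist (P.perm^[k] x) * P.orbitSign x k = Q.orbitSign (f.toEquiv x) k * f.twist x := by
  induction k with
  | zero => simp [orbitSign_zero]
  | succ k ih =>
    rw [orbitSign_succ, orbitSign_succ, Function.iterate_succ_apply', mul_left_comm,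
      f.twist_perm, f.map_iterate, mul_left_comm, mul_comm (P.orbitSign x k), ih, ← mul_assoc,
      mul_comm (Q.sign _)]

theorem minimalPeriod_pos [Finite α] (P : SignedPerm α) (x : α) :
    0 < Function.minimalPeriod P.perm x :=
  Function.minimalPeriod_pos_of_mem_periodicPts (P.perm.injective.mem_periodicPts x)

/-- The length and the sign of the cycle through `x`. -/
noncomputable def label [Finite α] (P : SignedPerm α) (x : α) : ℕ+ × ℤˣ :=
  (⟨Function.minimalPeriod P.perm x, P.minimalPeriod_pos x⟩,
    P.orbitSign x (Function.minimalPeriod P.perm x))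

theorem Iso.label_eq [Finite α] [Finite β] {P : SignedPerm α} {Q : SignedPerm β} (f : Iso P Q)
    (x : α) : Q.label (f.toEquiv x) = P.label x := by
  have h := f.twist_iterate x (Function.minimalPeriod P.perm x)
  rw [Function.iterate_minimalPeriod, mul_comm] at h
  refine Prod.ext (PNat.eq (f.minimalPeriod_eq x)) ?_
  change Q.orbitSign _ _ = P.orbitSign _ _
  rw [f.minimalPeriod_eq]
  exact (mul_right_cancel h).symm

end Label

section CycleModel

variable {ι : Type*} (lab : ι → ℕ+ × ℤˣ)

/-- The signed permutation with one cycle for each `i : ι`, of length `(lab i).1`, all of whose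
signs are `1` but the last one, which is `(lab i).2`. -/
def cycleModel : SignedPerm (Σ i, ZMod (lab i).1) where
  perm := Equiv.sigmaCongrRight fun _ => Equiv.addRight 1
  sign x := if x.2 + 1 = 0 then (lab x.1).2 else 1

theorem cycleModel_perm (i : ι) (a : ZMod (lab i).1) :
    (cycleModel lab).perm ⟨i, a⟩ = ⟨i, a + 1⟩ := rfl

theorem cycleModel_sign (i : ι) (a : ZMod (lab i).1) :
    (cycleModel lab).sign ⟨i, a⟩ = if a + 1 = 0 then (lab i).2 else 1 := rfl

theorem cycleModel_perm_iterate (k : ℕ) (i : ι) (a : ZMod (lab i).1) :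
    (cycleModel lab).perm^[k] ⟨i, a⟩ = ⟨i, a + k⟩ := by
  induction k with
  | zero => simp
  | succ k ih => rw [Function.iterate_succ_apply', ih, cycleModel_perm, Nat.cast_succ, add_assoc]

theorem minimalPeriod_cycleModel (i : ι) (a : ZMod (lab i).1) :
    Function.minimalPeriod (cycleModel lab).perm ⟨i, a⟩ = (lab i).1 := by
  refine Nat.dvd_right_iff_eq.1 fun k => ?_
  rw [← Function.isPeriodicPt_iff_minimalPeriod_dvd, Function.IsPeriodicPt, Function.IsFixedPt,
    cycleModel_perm_iterate, ← ZMod.natCast_eq_zero_iff]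
  simp

theorem prod_sign_cycleModel (i : ι) :
    ∏ a : ZMod (lab i).1, (cycleModel lab).sign ⟨i, a⟩ = (lab i).2 := by
  simp only [cycleModel_sign, add_eq_zero_iff_eq_neg, Finset.prod_ite_eq', Finset.mem_univ, if_true]

theorem label_cycleModel [Finite ι] (x : Σ i, ZMod (lab i).1) :
    (cycleModel lab).label x = lab x.1 := by
  obtain ⟨i, a⟩ := x
  have hperiod := minimalPeriod_cycleModel lab i a
  refine Prod.ext (PNat.eq hperiod) ?_
  change orbitSign _ _ _ = _
  rw [hperiod, ← prod_sign_cycleModel, orbitSign]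
  simp only [cycleModel_perm_iterate]
  refine Finset.prod_bij' (fun k _ => a + k) (fun b _ => (b - a).val) ?_ ?_ ?_ ?_ ?_
  · simp
  · simp [ZMod.val_lt]
  · intro k hk
    simp [ZMod.val_cast_of_lt (Finset.mem_range.1 hk)]
  · simp
  · simp

theorem card_cycleModel [Fintype ι] :
    Fintype.card (Σ i, ZMod (lab i).1) = SignedType.size (Finset.univ.val.map lab) := by
  simp only [Fintype.card_sigma, ZMod.card, SignedType.size, Multiset.map_map]
  rfl

theorem totalSign_cycleModel [Fintype ι] :
    totalSign (cycleModel lab) = SignedType.sign (Finset.univ.val.map lab) := by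
  rw [totalSign_apply, Fintype.prod_sigma]
  simp only [prod_sign_cycleModel, SignedType.sign, Multiset.map_map]
  rfl

theorem card_label_cycleModel [Fintype ι] (x : ℕ+ × ℤˣ) :
    Nat.card {p // (cycleModel lab).label p = x} =
      x.1 * (Finset.univ.val.map lab).count x := by
  classical
  have hterm (i : ι) : (∑ _a : ZMod (lab i).1, if lab i = x then 1 else 0) =
      (x.1 : ℕ) * if x = lab i then 1 else 0 := by
    obtain rfl | hi := eq_or_ne x (lab i)
    · simp [ZMod.card]
    · simp [hi, hi.symm]
  simp only [label_cycleModel, Nat.card_eq_fintype_card, Fintype.card_subtype,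
    Finset.card_filter, Fintype.sum_sigma, hterm, ← Finset.mul_sum]
  rw [← Finset.card_filter, Multiset.count_map, Finset.card_def, Finset.filter_val]

/-- Cycle models only depend on the family of labels up to reindexing. -/
def cycleModelReindex {κ : Type*} (e : ι ≃ κ) (lab : κ → ℕ+ × ℤˣ) :
    Iso (cycleModel (lab ∘ e)) (cycleModel lab) where
  toEquiv := Equiv.sigmaCongrLeft (β := fun k => ZMod (lab k).1) e
  twist _ := 1
  map_perm _ := rfl
  twist_perm _ := mul_comm _ _

end CycleModel

section CycleType

variable {α β : Type*}

/-- The cycles of a signed permutation, including those of length one. -/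
def Cycles (P : SignedPerm α) : Type _ := Quotient (Equiv.Perm.SameCycle.setoid P.perm)

variable (P : SignedPerm α)

noncomputable instance [Finite α] : Fintype P.Cycles :=
  @Fintype.ofFinite _ (inferInstanceAs (Finite (Quotient (Equiv.Perm.SameCycle.setoid P.perm))))

/-- A point of the cycle `q`. -/
noncomputable def cycleRep (q : P.Cycles) : α := Quotient.out q

theorem exists_perm_iterate_cycleRep [Finite α] (x : α) :
    ∃ q k, P.perm^[k] (P.cycleRep q) = x := by
  let q : P.Cycles := Quotient.mk _ x
  have hq : P.perm.SameCycle (P.cycleRep q) x :=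
    Quotient.mk_out (s := Equiv.Perm.SameCycle.setoid P.perm) x
  obtain ⟨k, hk⟩ := hq.exists_nat_pow_eq
  exact ⟨q, k, hk⟩

theorem eq_of_perm_iterate_cycleRep_eq {q r : P.Cycles} {j k : ℕ}
    (h : P.perm^[j] (P.cycleRep q) = P.perm^[k] (P.cycleRep r)) : q = r := by
  have hqr : P.perm.SameCycle (P.cycleRep q) (P.cycleRep r) := by
    rw [← Equiv.Perm.sameCycle_pow_left (n := j), ← Equiv.Perm.sameCycle_pow_right (n := k),
      ← Equiv.Perm.iterate_eq_pow, ← Equiv.Perm.iterate_eq_pow, h]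
  exact (Quotient.out_equiv_out (s := Equiv.Perm.SameCycle.setoid P.perm)).1 hqr

variable [Finite α]

theorem bijective_cycleModel : Function.Bijective
    fun x : Σ q, ZMod (P.label (P.cycleRep q)).1 => P.perm^[x.2.val] (P.cycleRep x.1) := by
  constructor
  · rintro ⟨q, a⟩ ⟨r, b⟩ h
    obtain rfl := P.eq_of_perm_iterate_cycleRep_eq h
    refine Sigma.ext rfl (heq_of_eq (ZMod.val_injective _ ?_))
    exact (Function.iterate_eq_iterate_iff_of_lt_minimalPeriod (ZMod.val_lt a) (ZMod.val_lt b)).1 h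
  · intro x
    obtain ⟨q, k, rfl⟩ := P.exists_perm_iterate_cycleRep x
    refine ⟨⟨q, k⟩, ?_⟩
    dsimp only
    rw [ZMod.val_natCast]
    exact Function.iterate_mod_minimalPeriod_eq

/-- Each cycle is moved to its model by pushing all signs to its last point. -/
noncomputable def isoCycleModel : Iso (cycleModel fun q => P.label (P.cycleRep q)) P where
  toEquiv := Equiv.ofBijective _ P.bijective_cycleModel
  twist x := P.orbitSign (P.cycleRep x.1) x.2.val
  map_perm x := by
    obtain ⟨q, a⟩ := x
    change P.perm^[(a + 1).val] _ = P.perm (P.perm^[a.val] _)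
    rw [val_add_one_eq_mod, ← Function.iterate_succ_apply' P.perm]
    exact Function.iterate_mod_minimalPeriod_eq
  twist_perm x := by
    obtain ⟨q, a⟩ := x
    change P.orbitSign _ (a + 1).val * (cycleModel _).sign _ = P.sign (P.perm^[a.val] _) * _
    rw [mul_comm (P.sign _), ← orbitSign_succ, cycleModel_sign]
    split_ifs with ha
    · rw [ha, ZMod.val_zero, orbitSign_zero, one_mul, val_add_one_of_eq_zero ha]
      rfl
    · rw [mul_one, val_add_one_of_ne_zero ha]
      rfl

/-- The multiset of the labels of all cycles. -/
noncomputable def cycleType : SignedType :=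
  Finset.univ.val.map fun q => P.label (P.cycleRep q)

theorem count_cycleType (x : ℕ+ × ℤˣ) :
    x.1 * P.cycleType.count x = Nat.card {p // P.label p = x} := by
  rw [cycleType, ← card_label_cycleModel]
  exact Nat.card_congr (P.isoCycleModel.toEquiv.subtypeEquiv fun p => by rw [Iso.label_eq])

variable {P}

theorem Iso.cycleType_eq [Finite β] {Q : SignedPerm β} (f : Iso P Q) :
    P.cycleType = Q.cycleType := by
  ext x
  refine mul_left_cancel₀ x.1.ne_zero ?_
  rw [count_cycleType, count_cycleType]
  exact Nat.card_congr (f.toEquiv.subtypeEquiv fun p => by rw [f.label_eq])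

variable (P)

theorem cycleType_cycleModel {ι : Type*} [Fintype ι] (lab : ι → ℕ+ × ℤˣ) :
    (cycleModel lab).cycleType = Finset.univ.val.map lab := by
  ext x
  refine mul_left_cancel₀ x.1.ne_zero ?_
  rw [count_cycleType, card_label_cycleModel]

theorem size_cycleType {α : Type*} [Fintype α] (P : SignedPerm α) :
    P.cycleType.size = Fintype.card α := by
  rw [cycleType, ← card_cycleModel]
  exact Fintype.card_congr P.isoCycleModel.toEquiv

theorem sign_cycleType {α : Type*} [Fintype α] (P : SignedPerm α) :
    P.cycleType.sign = totalSign P := by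
  rw [cycleType, ← totalSign_cycleModel, P.isoCycleModel.totalSign_eq]

theorem nonempty_iso_iff [Finite β] {Q : SignedPerm β} :
    Nonempty (Iso P Q) ↔ P.cycleType = Q.cycleType := by
  refine ⟨fun ⟨f⟩ => f.cycleType_eq, fun h => ?_⟩
  obtain ⟨e, he⟩ := exists_equiv_comp_eq h
  have g := cycleModelReindex e fun q => Q.label (Q.cycleRep q)
  rw [he] at g
  exact ⟨P.isoCycleModel.symm.trans (g.trans Q.isoCycleModel)⟩

/-- Transport of a signed permutation along a bijection. -/
def congr {α β : Type*} (e : α ≃ β) (P : SignedPerm α) : SignedPerm β where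
  perm := e.permCongr P.perm
  sign := P.sign ∘ e.symm

/-- A signed permutation is isomorphic to its transports. -/
def isoCongr {α β : Type*} (e : α ≃ β) (P : SignedPerm α) : Iso P (P.congr e) where
  toEquiv := e
  twist _ := 1
  map_perm x := by simp [congr]
  twist_perm x := by simp [congr]

theorem exists_cycleType_eq {α : Type*} [Fintype α] {M : SignedType}
    (hM : M.size = Fintype.card α) : ∃ P : SignedPerm α, P.cycleType = M := by
  let lab (i : M) : ℕ+ × ℤˣ := i.1
  have hlab : Finset.univ.val.map lab = M := M.map_univ_coe
  have hcard : Fintype.card (Σ i, ZMod (lab i).1) = Fintype.card α := by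
    rw [card_cycleModel, hlab, hM]
  refine ⟨(cycleModel lab).congr (Fintype.equivOfCardEq hcard), ?_⟩
  rw [← (isoCongr _ _).cycleType_eq, cycleType_cycleModel, hlab]

end CycleType

section Automorphism

variable {ι : Type*} (lab : ι → ℕ+ × ℤˣ)

theorem twistSign_cycleModel_of_isSplit [Fintype ι] {lab : ι → ℕ+ × ℤˣ}
    (hlab : ∀ i, (lab i).2 = 1 ∧ Even ((lab i).1 : ℕ))
    (f : Iso (cycleModel lab) (cycleModel lab)) : f.twistSign = 1 := by
  have hsign (x : Σ i, ZMod (lab i).1) : (cycleModel lab).sign x = 1 := by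
    rw [cycleModel_sign, (hlab _).1, ite_self]
  have hconst (i : ι) (a : ZMod (lab i).1) : f.twist ⟨i, a⟩ = f.twist ⟨i, 0⟩ := by
    have h := f.twist_iterate ⟨i, 0⟩ a.val
    simpa only [orbitSign, hsign, Finset.prod_const_one, mul_one, one_mul,
      cycleModel_perm_iterate, ZMod.natCast_zmod_val, zero_add] using h
  rw [Iso.twistSign, Fintype.prod_sigma]
  refine Finset.prod_eq_one fun i _ => ?_
  rw [Finset.prod_congr rfl fun a _ => hconst i a, Finset.prod_const, Finset.card_univ, ZMod.card,
    Int.units_pow_eq_pow_mod_two, Nat.even_iff.1 (hlab i).2, pow_zero]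

/-- Rotation of the cycle `i`. -/
def rotateCycle [DecidableEq ι] (i : ι) :
    Iso (cycleModel lab) (cycleModel lab) where
  toEquiv := Equiv.sigmaCongrRight fun j => Equiv.addRight (if j = i then 1 else 0)
  twist x := if x.1 = i then (cycleModel lab).sign x else 1
  map_perm x := Sigma.ext rfl (heq_of_eq (add_right_comm _ _ _))
  twist_perm x := by
    obtain ⟨j, a⟩ := x
    change (if j = i then (cycleModel lab).sign ⟨j, a + 1⟩ else 1) * _ =
      (cycleModel lab).sign ⟨j, a + if j = i then 1 else 0⟩ * if j = i then _ else 1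
    split_ifs with hj
    · rfl
    · rw [add_zero, mul_comm]

/-- Negation of the cycle `i`. -/
def negateCycle [DecidableEq ι] (i : ι) :
    Iso (cycleModel lab) (cycleModel lab) where
  toEquiv := Equiv.refl _
  twist x := if x.1 = i then -1 else 1
  map_perm _ := rfl
  twist_perm _ := mul_comm _ _

theorem twistSign_rotateCycle [Fintype ι] [DecidableEq ι] (i : ι) :
    (rotateCycle lab i).twistSign = (lab i).2 := by
  rw [Iso.twistSign, Fintype.prod_sigma, Fintype.prod_eq_single i]
  · simp only [rotateCycle, if_true, prod_sign_cycleModel]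
  · intro j hj
    simp only [rotateCycle, if_neg hj, Finset.prod_const_one]

theorem twistSign_negateCycle [Fintype ι] [DecidableEq ι] (i : ι) :
    (negateCycle lab i).twistSign = (-1) ^ ((lab i).1 : ℕ) := by
  rw [Iso.twistSign, Fintype.prod_sigma, Fintype.prod_eq_single i]
  · simp only [negateCycle, if_true, Finset.prod_const, Finset.card_univ, ZMod.card]
  · intro j hj
    simp only [negateCycle, if_neg hj, Finset.prod_const_one]

theorem exists_twistSign_cycleModel_eq_neg_one [Fintype ι] {lab : ι → ℕ+ × ℤˣ}
    (hlab : ¬ ∀ i, (lab i).2 = 1 ∧ Even ((lab i).1 : ℕ)) :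
    ∃ f : Iso (cycleModel lab) (cycleModel lab), f.twistSign = -1 := by
  classical
  obtain ⟨i, hi⟩ := not_forall.1 hlab
  obtain hsign | hsign := Int.units_eq_one_or (lab i).2
  · have hodd : Odd ((lab i).1 : ℕ) := Nat.not_even_iff_odd.1 fun h => hi ⟨hsign, h⟩
    exact ⟨negateCycle lab i, by rw [twistSign_negateCycle, hodd.neg_one_pow]⟩
  · exact ⟨rotateCycle lab i, by rw [twistSign_rotateCycle, hsign]⟩

theorem isSplit_cycleType_iff {α : Type*} [Fintype α] (P : SignedPerm α) :
    P.cycleType.IsSplit ↔ ∀ f : Iso P P, f.twistSign = 1 := by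
  let e := P.isoCycleModel
  have hlab : P.cycleType.IsSplit ↔ ∀ q, (P.label (P.cycleRep q)).2 = 1 ∧
      Even ((P.label (P.cycleRep q)).1 : ℕ) := by
    simp [SignedType.IsSplit, cycleType]
  rw [hlab]
  refine ⟨fun h f => ?_, fun h => ?_⟩
  · have hf := twistSign_cycleModel_of_isSplit h ((e.trans f).trans e.symm)
    rwa [Iso.twistSign_trans, Iso.twistSign_trans, Iso.twistSign_symm, mul_left_comm,
      Int.units_mul_self, mul_one] at hf
  · by_contra hsplit
    obtain ⟨f, hf⟩ := exists_twistSign_cycleModel_eq_neg_one hsplit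
    have hone := h ((e.symm.trans f).trans e)
    rw [Iso.twistSign_trans, Iso.twistSign_trans, Iso.twistSign_symm, mul_left_comm,
      Int.units_mul_self, mul_one, hf] at hone
    exact absurd hone (by decide)

end Automorphism

end SignedPerm

section IndexTwo

variable {G : Type*} [Group G]

theorem card_conjClasses_congr {K : Type*} [Group K] (e : G ≃* K) :
    Nat.card (ConjClasses G) = Nat.card (ConjClasses K) :=
  Nat.card_congr <| Quotient.congr e.toEquiv fun a b =>
    ⟨fun h => e.toMonoidHom.map_isConj h, fun h => by
      rw [← e.symm_apply_apply a, ← e.symm_apply_apply b]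
      exact e.symm.toMonoidHom.map_isConj h⟩

variable {H : Subgroup G}

theorem carrier_mk_subset_iff (hH : H.Normal) {g : G} :
    (ConjClasses.mk g).carrier ⊆ H ↔ g ∈ H := by
  refine ⟨fun h => h ConjClasses.mem_carrier_mk, fun hg k hk => ?_⟩
  rw [ConjClasses.mem_carrier_iff_mk_eq, eq_comm, ConjClasses.mk_eq_mk_iff_isConj] at hk
  obtain ⟨c, rfl⟩ := isConj_iff.1 hk
  exact hH.conj_mem g hg c

theorem forall_centralizer_le_iff (hH : H.Normal) {g : G} :
    (∀ k ∈ (ConjClasses.mk g).carrier, Subgroup.centralizer {k} ≤ H) ↔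
      ∀ c, Commute c g → c ∈ H := by
  refine ⟨fun h c hc => h g ConjClasses.mem_carrier_mk
    (Subgroup.mem_centralizer_singleton_iff.2 hc), fun h k hk c hc => ?_⟩
  rw [ConjClasses.mem_carrier_iff_mk_eq, ConjClasses.mk_eq_mk_iff_isConj] at hk
  obtain ⟨a, rfl⟩ := isConj_iff.1 hk
  have hcomm : Commute c k := Subgroup.mem_centralizer_singleton_iff.1 hc
  have hconj := h (a * c * a⁻¹) (hcomm.conj a)
  rwa [hH.mem_comm_iff, inv_mul_cancel_left] at hconj

theorem isConj_subgroup_iff {g h : H} : IsConj g h ↔ ∃ c ∈ H, SemiconjBy c (g : G) h := by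
  simp only [isConj_iff, SemiconjBy, ← mul_inv_eq_iff_eq_mul, Subtype.ext_iff, Subtype.exists,
    exists_prop, H.coe_mul, H.coe_inv]

theorem map_mk_eq_iff [H.Normal] (hH : H.index = 2) {s : G} (hs : s ∉ H) {g h : H} :
    ConjClasses.map H.subtype (ConjClasses.mk h) = ConjClasses.mk (g : G) ↔
      ConjClasses.mk h = ConjClasses.mk g ∨
        ConjClasses.mk h = ConjClasses.mk (MulAut.conjNormal s g) := by
  change ConjClasses.mk (h : G) = _ ↔ _
  simp only [ConjClasses.mk_eq_mk_iff_isConj, isConj_subgroup_iff, MulAut.conjNormal_apply]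
  constructor
  · rintro ⟨c, hc⟩
    by_cases hcH : (c : G) ∈ H
    · exact Or.inl ⟨c, hcH, hc⟩
    · refine Or.inr ⟨s * c, (Subgroup.mul_mem_iff_of_index_two hH).2 (iff_of_false hs hcH), ?_⟩
      exact (SemiconjBy.conj_mk s _).mul_left hc
  · rintro (⟨c, -, hc⟩ | ⟨c, -, hc⟩)
    · exact isConj_iff.2 ⟨c, mul_inv_eq_iff_eq_mul.2 hc⟩
    · have hconj : IsConj (h : G) (s * g * s⁻¹) := isConj_iff.2 ⟨c, mul_inv_eq_iff_eq_mul.2 hc⟩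
      exact hconj.trans (isConj_iff.2 ⟨s, rfl⟩).symm

theorem mk_conjNormal_eq_iff [H.Normal] (hH : H.index = 2) {s : G} (hs : s ∉ H) {g : H} :
    ConjClasses.mk g = ConjClasses.mk (MulAut.conjNormal s g) ↔ ∃ c ∉ H, Commute c (g : G) := by
  simp only [ConjClasses.mk_eq_mk_iff_isConj, isConj_subgroup_iff, MulAut.conjNormal_apply]
  have hsinv : SemiconjBy s⁻¹ (s * (g : G) * s⁻¹) g := by
    simp [SemiconjBy, mul_assoc]
  constructor
  · rintro ⟨c, hc, hsemi⟩
    refine ⟨s⁻¹ * c, fun h => hs ?_, hsinv.mul_left hsemi⟩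
    rwa [← H.inv_mem_iff, ← H.mul_mem_cancel_right hc]
  · rintro ⟨c, hc, hcomm⟩
    exact ⟨s * c, (Subgroup.mul_mem_iff_of_index_two hH).2 (iff_of_false hs hc),
      (SemiconjBy.conj_mk s _).mul_left hcomm⟩

open Classical in
theorem card_fiber_map_subtype_of_mem [H.Normal] (hH : H.index = 2) (g : H) :
    Nat.card {x // ConjClasses.map H.subtype x = ConjClasses.mk (g : G)} =
      1 + if ∀ c, Commute c (g : G) → c ∈ H then 1 else 0 := by
  obtain ⟨s, hs, -⟩ := Subgroup.index_eq_two_iff_exists_notMem_and.1 hH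
  have hfiber : {x | ConjClasses.map H.subtype x = ConjClasses.mk (g : G)} =
      {ConjClasses.mk g, ConjClasses.mk (MulAut.conjNormal s g)} := by
    ext x
    obtain ⟨h, rfl⟩ := x.exists_rep
    exact map_mk_eq_iff hH hs
  change Set.ncard {x | ConjClasses.map H.subtype x = ConjClasses.mk (g : G)} = _
  rw [hfiber]
  split_ifs with hcent
  · refine Set.ncard_pair fun heq => ?_
    obtain ⟨c, hc, hcomm⟩ := (mk_conjNormal_eq_iff hH hs).1 heq
    exact hc (hcent c hcomm)
  · push Not at hcent
    obtain ⟨c, hcomm, hc⟩ := hcent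
    rw [← (mk_conjNormal_eq_iff hH hs).2 ⟨c, hc, hcomm⟩, Set.pair_eq_singleton,
      Set.ncard_singleton]

open Classical in
theorem card_fiber_map_subtype (hH : H.index = 2) (C : ConjClasses G) :
    Nat.card {x // ConjClasses.map H.subtype x = C} =
      (if C.carrier ⊆ H then 1 else 0) +
        if ∀ g ∈ C.carrier, Subgroup.centralizer {g} ≤ H then 1 else 0 := by
  have hnormal := Subgroup.normal_of_index_eq_two hH
  obtain ⟨g, rfl⟩ := C.exists_rep
  rw [carrier_mk_subset_iff hnormal, forall_centralizer_le_iff hnormal]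
  by_cases hg : g ∈ H
  · rw [if_pos hg, ← card_fiber_map_subtype_of_mem hH ⟨g, hg⟩]
  · have : IsEmpty {x // ConjClasses.map H.subtype x = ConjClasses.mk g} := by
      refine ⟨fun ⟨x, hx⟩ => hg ?_⟩
      obtain ⟨h, rfl⟩ := x.exists_rep
      rw [← carrier_mk_subset_iff hnormal, ← hx]
      exact (carrier_mk_subset_iff hnormal).2 h.2
    rw [Nat.card_of_isEmpty, if_neg hg, if_neg fun h => hg (h g (Commute.refl g))]

theorem card_conjClasses_of_index_eq_two [Finite G] (hH : H.index = 2) :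
    Nat.card (ConjClasses H) = Nat.card {C : ConjClasses G // C.carrier ⊆ H} +
      Nat.card {C : ConjClasses G // ∀ g ∈ C.carrier, Subgroup.centralizer {g} ≤ H} := by
  classical
  have := Fintype.ofFinite (ConjClasses G)
  rw [← Nat.card_congr (Equiv.sigmaFiberEquiv (ConjClasses.map H.subtype)), Nat.card_sigma]
  simp only [card_fiber_map_subtype hH, Finset.sum_add_distrib, Finset.sum_boole, Nat.cast_id,
    Nat.card_eq_fintype_card, Fintype.card_subtype]

end IndexTwo

namespace SignedPerm

theorem isConj_iff_cycleType_eq {α : Type*} [Finite α] {P Q : SignedPerm α} :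
    IsConj P Q ↔ P.cycleType = Q.cycleType := by
  have := Fintype.ofFinite α
  rw [← nonempty_iso_iff, isConj_iff]
  simp only [mul_inv_eq_iff_eq_mul]
  refine ⟨fun ⟨c, hc⟩ => ?_, fun ⟨f⟩ => ?_⟩
  · obtain ⟨f, -⟩ := exists_iso_twistSign_eq_iff.2 ⟨c, hc, rfl⟩
    exact ⟨f⟩
  · obtain ⟨c, hc, -⟩ := exists_iso_twistSign_eq_iff.1 ⟨f, rfl⟩
    exact ⟨c, hc⟩

variable {α : Type*} [Fintype α]

/-- Conjugacy classes of signed permutations correspond to cycle types. -/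
noncomputable def conjClassesEquiv :
    ConjClasses (SignedPerm α) ≃ {M : SignedType // M.size = Fintype.card α} :=
  Equiv.ofBijective
    (Quotient.lift (fun P => ⟨P.cycleType, P.size_cycleType⟩) fun _ _ h =>
      Subtype.ext (isConj_iff_cycleType_eq.1 h))
    ⟨by
      rintro ⟨P⟩ ⟨Q⟩ h
      exact ConjClasses.mk_eq_mk_iff_isConj.2 (isConj_iff_cycleType_eq.2 (Subtype.ext_iff.1 h)),
    fun ⟨M, hM⟩ => by
      obtain ⟨P, rfl⟩ := exists_cycleType_eq hM
      exact ⟨ConjClasses.mk P, rfl⟩⟩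

theorem card_conjClasses_forall_mem {p : SignedPerm α → Prop} {q : SignedType → Prop}
    (hpq : ∀ P, p P ↔ q P.cycleType) :
    Nat.card {C : ConjClasses (SignedPerm α) // ∀ P ∈ C.carrier, p P} =
      Nat.card {M : SignedType // M.size = Fintype.card α ∧ q M} := by
  refine Nat.card_congr ((conjClassesEquiv.subtypeEquiv fun C => ?_).trans
    (Equiv.subtypeSubtypeEquivSubtypeInter _ q))
  obtain ⟨P, rfl⟩ := C.exists_rep
  change _ ↔ q P.cycleType
  simp only [ConjClasses.mem_carrier_iff_mk_eq, ConjClasses.mk_eq_mk_iff_isConj,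
    isConj_iff_cycleType_eq, hpq]
  exact ⟨fun h => h P rfl, fun h Q hQ => hQ ▸ h⟩

theorem centralizer_le_ker_totalSign_iff (P : SignedPerm α) :
    Subgroup.centralizer {P} ≤ totalSign.ker ↔ P.cycleType.IsSplit := by
  rw [isSplit_cycleType_iff]
  refine ⟨fun h f => ?_, fun h c hc => ?_⟩
  · obtain ⟨c, hc, hf⟩ := exists_iso_twistSign_eq_iff.1 ⟨f, rfl⟩
    rw [← hf]
    exact h (Subgroup.mem_centralizer_singleton_iff.2 hc)
  · obtain ⟨f, hf⟩ := exists_iso_twistSign_eq_iff.2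
      ⟨c, Subgroup.mem_centralizer_singleton_iff.1 hc, rfl⟩
    exact MonoidHom.mem_ker.2 (hf ▸ h f)

theorem index_ker_totalSign [Nonempty α] : (totalSign (α := α)).ker.index = 2 := by
  classical
  have hsurj : Function.Surjective (totalSign (α := α)) := fun ε => by
    obtain ⟨x⟩ := ‹Nonempty α›
    exact ⟨⟨1, Pi.mulSingle x ε⟩, Fintype.prod_pi_mulSingle' x ε⟩
  rw [Subgroup.index_ker, MonoidHom.range_eq_top.2 hsurj, Subgroup.card_top]
  exact Nat.card_eq_fintype_card

theorem card_conjClasses_ker_totalSign [Nonempty α] :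
    Nat.card (ConjClasses (totalSign (α := α)).ker) =
      Nat.card {M : SignedType // M.size = Fintype.card α ∧ M.sign = 1} +
        Nat.card {M : SignedType // M.size = Fintype.card α ∧ M.IsSplit} := by
  rw [card_conjClasses_of_index_eq_two index_ker_totalSign,
    ← card_conjClasses_forall_mem centralizer_le_ker_totalSign_iff,
    ← card_conjClasses_forall_mem fun P => by rw [sign_cycleType, ← MonoidHom.mem_ker]]
  rfl

end SignedPerm

section Matrices

namespace SignedPerm

variable {n : ℕ}

/-- The matrix of a signed permutation, whose column `j` is `sign j` times the basis vector
`perm j`. -/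
def toMatrix : SignedPerm (Fin n) →* Matrix (Fin n) (Fin n) ℤ where
  toFun P := Matrix.of fun i j => if P.perm j = i then (P.sign j : ℤ) else 0
  map_one' := by
    ext i j
    simp [Matrix.one_apply, perm_one, sign_one, eq_comm]
  map_mul' P Q := by
    ext i j
    rw [Matrix.mul_apply, Fintype.sum_eq_single (Q.perm j) fun k hk => by simp [hk.symm]]
    by_cases h : P.perm (Q.perm j) = i <;> simp [perm_mul, sign_mul, h]

theorem toMatrix_apply (P : SignedPerm (Fin n)) (i j : Fin n) :
    P.toMatrix i j = if P.perm j = i then (P.sign j : ℤ) else 0 := rfl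

theorem toMatrix_perm_apply (P : SignedPerm (Fin n)) (j : Fin n) :
    P.toMatrix (P.perm j) j = P.sign j := if_pos rfl

theorem toMatrix_ne_zero_iff {P : SignedPerm (Fin n)} {i j : Fin n} :
    P.toMatrix i j ≠ 0 ↔ P.perm j = i := by
  simp [toMatrix_apply]

theorem toMatrix_injective : Function.Injective (toMatrix (n := n)) := by
  intro P Q h
  have hperm (j : Fin n) : P.perm j = Q.perm j := by
    rw [eq_comm, ← toMatrix_ne_zero_iff, ← h, toMatrix_ne_zero_iff]
  refine SignedPerm.ext (Equiv.ext hperm) (funext fun j => Units.ext ?_)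
  rw [← toMatrix_perm_apply, ← toMatrix_perm_apply, h, hperm]

theorem isSignedPerm_toMatrix (P : SignedPerm (Fin n)) : IsSignedPerm P.toMatrix := by
  refine ⟨fun i j => ?_, fun i => ?_, fun j => ?_⟩
  · rw [toMatrix_apply]
    obtain h | h := Int.units_eq_one_or (P.sign j) <;> split_ifs <;> simp [h]
  · simp only [toMatrix_ne_zero_iff]
    exact P.perm.bijective.existsUnique i
  · simp only [toMatrix_ne_zero_iff]
    exact existsUnique_eq'

theorem exists_toMatrix_eq {M : Matrix (Fin n) (Fin n) ℤ} (hM : IsSignedPerm M) :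
    ∃ P : SignedPerm (Fin n), P.toMatrix = M := by
  obtain ⟨hentry, hrow, hcol⟩ := hM
  choose f hf hf_unique using hcol
  have hinj : Function.Injective f := fun j k hjk =>
    (hrow (f j)).unique (hf j) (hjk ▸ hf k)
  have hunit (j : Fin n) : IsUnit (M (f j) j) :=
    Int.isUnit_iff.2 ((hentry (f j) j).resolve_left (hf j))
  refine ⟨⟨Equiv.ofBijective f (Finite.injective_iff_bijective.1 hinj), fun j => (hunit j).unit⟩,
    ?_⟩
  ext i j
  rw [toMatrix_apply, Equiv.ofBijective_apply]
  split_ifs with hij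
  · rw [IsUnit.unit_spec, hij]
  · by_contra hne
    exact hij (hf_unique j i (Ne.symm hne)).symm

theorem card_toMatrix_eq_neg_one (P : SignedPerm (Fin n)) :
    (Finset.univ.filter fun p : Fin n × Fin n => P.toMatrix p.1 p.2 = -1).card =
      (Finset.univ.filter fun j => P.sign j = -1).card := by
  symm
  refine Finset.card_nbij (fun j => (P.perm j, j)) (fun j hj => ?_)
    (fun j _ k _ h => congrArg Prod.snd h) fun ⟨i, j⟩ hij => ?_
  · simp_all [toMatrix_perm_apply]
  · have hentry : P.toMatrix i j = -1 := by simpa using hij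
    obtain rfl := toMatrix_ne_zero_iff.1 (hentry.trans_ne (by decide))
    rw [toMatrix_perm_apply] at hentry
    exact ⟨j, by simpa using Units.ext hentry, rfl⟩

theorem isWeylD_toMatrix_iff (P : SignedPerm (Fin n)) : IsWeylD P.toMatrix ↔ P ∈ totalSign.ker := by
  have hprod : totalSign P = (-1) ^ (Finset.univ.filter fun j => P.sign j = -1).card := by
    rw [totalSign_apply, ← Finset.prod_const, Finset.prod_filter]
    refine Finset.prod_congr rfl fun j _ => ?_
    obtain h | h := Int.units_eq_one_or (P.sign j) <;> simp [h]
  rw [IsWeylD, and_iff_right P.isSignedPerm_toMatrix, card_toMatrix_eq_neg_one, MonoidHom.mem_ker,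
    hprod, neg_one_pow_eq_one_iff_even (by decide)]

theorem map_ker_totalSign_eq {D : Subgroup (GL (Fin n) ℤ)}
    (hD : ∀ g : GL (Fin n) ℤ, g ∈ D ↔ IsWeylD (g : Matrix (Fin n) (Fin n) ℤ)) :
    totalSign.ker.map toMatrix.toHomUnits = D := by
  ext g
  rw [hD, Subgroup.mem_map]
  constructor
  · rintro ⟨P, hP, rfl⟩
    exact (isWeylD_toMatrix_iff P).2 hP
  · intro hg
    obtain ⟨P, hP⟩ := exists_toMatrix_eq hg.1
    exact ⟨P, (isWeylD_toMatrix_iff P).1 (hP ▸ hg), Units.ext hP⟩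

theorem card_conjClasses_of_mem_iff_isWeylD (hn : 0 < n) {D : Subgroup (GL (Fin n) ℤ)}
    (hD : ∀ g : GL (Fin n) ℤ, g ∈ D ↔ IsWeylD (g : Matrix (Fin n) (Fin n) ℤ)) :
    Nat.card (ConjClasses D) = Nat.card {M : SignedType // M.size = n ∧ M.sign = 1} +
      Nat.card {M : SignedType // M.size = n ∧ M.IsSplit} := by
  have : Nonempty (Fin n) := ⟨⟨0, hn⟩⟩
  have hinj : Function.Injective (toMatrix (n := n)).toHomUnits := fun _ _ h =>
    toMatrix_injective (congrArg Units.val h)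
  rw [← map_ker_totalSign_eq hD,
    ← card_conjClasses_congr (totalSign.ker.equivMapOfInjective _ hinj),
    card_conjClasses_ker_totalSign, Fintype.card_fin]

end SignedPerm

end Matrices

theorem weight_count_SO_even_general {ℓ n : ℕ} (hℓ : 2 ≤ ℓ) (hn : 0 < n)
    (D : Subgroup (GL (Fin n) ℤ))
    (hD : ∀ g : GL (Fin n) ℤ, g ∈ D ↔ IsWeylD (g : Matrix (Fin n) (Fin n) ℤ)) :
    2 * Set.ncard {w ∈ weights ℓ n | w ∘ flipIdx ℓ = w} +
        (Set.ncard (weights ℓ n) - Set.ncard {w ∈ weights ℓ n | w ∘ flipIdx ℓ = w}) / 2 =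
      Nat.card (ConjClasses D) := by
  rw [ncard_weights hℓ, ncard_fixed_weights hℓ, SignedType.two_mul_add_half_sub,
    SignedPerm.card_conjClasses_of_mem_iff_isWeylD hn hD]

/-- Let `ℓ` be an odd prime and `n ≥ 2`.  Let `X` be the set of finitely supported functions
`w` assigning to each quadruple `(a, x, 𝔠, j)` an `ℓ`-core partition, subject to
`∑ ℓ^{a + |𝔠|} * |w (a, x, 𝔠, j)| = n`, let `σ` be the involution of `X` given by
`(σ w) (a, x, 𝔠, j) = w (a, 1 - x, 𝔠, j)`, and let `F` be the number of its fixed points.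
Then `2 * F + (|X| - F) / 2` equals the number of conjugacy classes of the Weyl group of
type `D_n`, realised as the group of `n × n` signed permutation matrices with an even
number of entries equal to `-1`. -/
theorem weight_count_SO_even (ℓ : ℕ) (hℓ : ℓ.Prime) (hodd : Odd ℓ) (n : ℕ) (hn : 2 ≤ n)
    (D : Subgroup (GL (Fin n) ℤ))
    (hD : ∀ g : GL (Fin n) ℤ, g ∈ D ↔ IsWeylD (g : Matrix (Fin n) (Fin n) ℤ))
    (X : Set ((ℕ × Fin 2 × Σ c : List ℕ+, Fin ((ℓ - 1) ^ c.length)) →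
        Σ m : ℕ, Nat.Partition m))
    (hX : X = { w | (∀ i, IsCore ℓ (w i).2) ∧
      { i | (w i).1 ≠ 0 }.Finite ∧
      ∑ᶠ i : ℕ × Fin 2 × Σ c : List ℕ+, Fin ((ℓ - 1) ^ c.length),
        ℓ ^ (i.1 + csum i.2.2.1) * (w i).1 = n })
    (F : ℕ) (hF : F = Set.ncard { w ∈ X | w ∘ flipIdx ℓ = w }) :
    2 * F + (Set.ncard X - F) / 2 = Nat.card (ConjClasses D) := by
  subst hX hF
  exact weight_count_SO_even_general hℓ.two_le (by lia) D hD
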